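/- arXiv:1412.3701 — 3 statements merged into one kernel-verified Lean document; each statement's English description precedes it below -/
import Mathlib

section
/- Let L = L_p(A) for a deterministic parity automaton A over Σ_I × Σ_O using k colors. The following are equivalent: (1) Player O wins the delay game Γ_f(L) for some delay function f; (2) Player O wins Γ_f(L) for some constant delay function f with f(0) ≤ 2^{2|A|k + 2} + 2. -/
/-!
Write `n = |Q|` and let `k` be the number of colors. The backward implication is trivial; for the
forward one, a winning strategy for some delay function is turned into one that looks ahead two
blocks of length `F = 2 ^ (2nk) + n (k + 1) ^ (2n)` (`blockLen`).

*Winning families.* A set `S` of state–color pairs with a progress measure `θ` (a sequence of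
ordinals, as for parity games) is called winning (`Win`) if after every long enough input block `w`
Player O can commit to a pair `(q, c) ∈ S` such that the pairs reachable from `q` via `w` are
winning again, with a measure that has progressed with respect to the color `c`. This is a
coinductive notion, and the required length may depend on `S` and `θ`. A winning strategy for an
arbitrary delay function makes the pairs reachable from the initial state via any nonempty word
winning (`win_of_causal`): the measure of a node of the game tree consists of its ranks, for odd
`e`, in the relation `Below` of extending a node with `e` the largest color in between, which is
well-founded because the strategy wins. Conversely, measures exclude an odd limit superior of the
colors (`no_descent`).

*A uniform block length.* The key fact is `Win.step_blockLen`: blocks of length `F` are always long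
enough. Colors are ordered by Player O's preference (`pref`), and a set of pairs is compared with
another one by domination (`Dom`), under which being winning is monotone. The first `2 ^ (2nk)`
letters of a block can be pumped simultaneously for all sets `H c` of states occurring in `S` with a
color at least as good as `c`: these sets form a chain, so for each state their effect is a monotone
sequence of `k` numbers in `{0, …, k}`, which is coded by a subset of `{0, …, 2k - 1}`
(`pump_nested`). The remaining letters single out one state of `H c`, each portion of
`(k + 1) ^ (2n)` letters splitting off one state by a pumping argument for two sets
(`not_winAdv_union`, `not_winAdv_start`).

*The bound.* For `k ≥ 2` one has `n (k + 1) ^ (2n) ≤ 2 ^ (2nk)`, hence `2F ≤ 2 ^ (2nk + 2)`. For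
`k = 1` all words or no words are accepted, and no lookahead is needed.
-/

namespace DelayGames

/-- A delay function: positive in every round. -/
def IsDelay (f : ℕ → ℕ) : Prop := ∀ i, 1 ≤ f i

/-- A constant delay function: `f i = 1` for all `i > 0`. -/
def IsConstant (f : ℕ → ℕ) : Prop := ∀ i, 0 < i → f i = 1

section Games

variable {I O : Type*}

/-- `α` is the ω-word obtained by concatenating the blocks `u 0, u 1, u 2, …`:
every finite concatenation of initial blocks is a prefix of `α`. -/
def IsCat (u : ℕ → List I) (α : ℕ → I) : Prop :=
  ∀ i, ((List.range i).map u).flatten =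
    (List.range (((List.range i).map u).flatten.length)).map α

/-- The blocks of Player I have the lengths prescribed by the delay function. -/
def ValidBlocks (f : ℕ → ℕ) (u : ℕ → List I) : Prop := ∀ i, (u i).length = f i

/-- The play `(u, v)` is consistent with the strategy `τ` of Player O:
in every round, `v i` is prescribed by `τ` applied to `u 0 ⋯ u i`. -/
def ConsistentO (τ : List I → O) (u : ℕ → List I) (v : ℕ → O) : Prop :=
  ∀ i, v i = τ (((List.range (i + 1)).map u).flatten)

/-- The play `(u, v)` is consistent with the strategy `τ` of Player I:
in every round, `u i` is prescribed by `τ` applied to `v 0 ⋯ v (i-1)`. -/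
def ConsistentI (τ : List O → List I) (u : ℕ → List I) (v : ℕ → O) : Prop :=
  ∀ i, u i = τ ((List.range i).map v)

/-- Player O wins the delay game `Γ_f(L)`: she has a strategy such that every
consistent play (against blocks of the prescribed lengths) has its outcome in `L`. -/
def WinsO (f : ℕ → ℕ) (L : Set (ℕ → I × O)) : Prop :=
  ∃ τ : List I → O, ∀ u v α, ValidBlocks f u → ConsistentO τ u v → IsCat u α →
    (fun n => (α n, v n)) ∈ L

/-- Player I wins the delay game `Γ_f(L)`: he has a strategy respecting the
lengths prescribed by `f` such that no consistent play has its outcome in `L`. -/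
def WinsI (f : ℕ → ℕ) (L : Set (ℕ → I × O)) : Prop :=
  ∃ τ : List O → List I, (∀ w, (τ w).length = f w.length) ∧
    ∀ u v α, ConsistentI τ u v → IsCat u α → (fun n => (α n, v n)) ∉ L

/-- Projection of a winning condition to the first components. -/
def projL (L : Set (ℕ → I × O)) : Set (ℕ → I) :=
  {α | ∃ β : ℕ → O, (fun n => (α n, β n)) ∈ L}

end Games

/-- The prefix of length `k` of an ω-word. -/
def pre {A : Type*} (x : ℕ → A) (k : ℕ) : List A := (List.range k).map x

/-- `K · A^ω`: the ω-words having a finite prefix in `K`. -/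
def extOmega {A : Type*} (K : Set (List A)) : Set (ℕ → A) := {x | ∃ k, pre x k ∈ K}

/-- Nondeterministic automata with a complete transition function. -/
structure NA (Q A : Type*) where
  init : Q
  trans : Q → A → Set Q
  accept : Set Q
  complete : ∀ q a, (trans q a).Nonempty

namespace NA

variable {Q A : Type*} (M : NA Q A)

/-- The automaton is deterministic. -/
def Deterministic : Prop := ∀ q a, ∃ q', M.trans q a = {q'}

/-- The states reachable from a set of states after reading a finite word. -/
def reach (S : Set Q) (w : List A) : Set Q :=
  w.foldl (fun T a => ⋃ q ∈ T, M.trans q a) S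

/-- The finite words accepted by `M` (runs from the initial state ending in `accept`). -/
def Lstar : Set (List A) := {w | (M.reach {M.init} w ∩ M.accept).Nonempty}

/-- `ρ` is a run of `M` on the ω-word `x`. -/
def IsRun (x : ℕ → A) (ρ : ℕ → Q) : Prop :=
  ρ 0 = M.init ∧ ∀ n, ρ (n + 1) ∈ M.trans (ρ n) (x n)

/-- Reachability acceptance: some run visits an accepting state at least once. -/
def Lexists : Set (ℕ → A) := {x | ∃ ρ, M.IsRun x ρ ∧ ∃ n, ρ n ∈ M.accept}

/-- Safety acceptance: some run visits only accepting states. -/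
def Lforall : Set (ℕ → A) := {x | ∃ ρ, M.IsRun x ρ ∧ ∀ n, ρ n ∈ M.accept}

/-- A state is productive if an accepting state is reachable from it. -/
def Productive (q : Q) : Prop := ∃ w, (M.reach {q} w ∩ M.accept).Nonempty

/-- A state lies on a cycle. -/
def OnCycle (q : Q) : Prop := ∃ w : List A, w ≠ [] ∧ q ∈ M.reach {q} w

/-- An automaton is acyclic if every state on a cycle is non-productive. -/
def Acyclic : Prop := ∀ q, M.OnCycle q → ¬ M.Productive q

/-- A state is reachable from the initial state. -/
def ReachableState (q : Q) : Prop := ∃ w, q ∈ M.reach {M.init} w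

/-- `k` is the depth of the (acyclic) automaton `M`: the length of a longest
path from the initial state to an accepting state. -/
def HasDepth (k : ℕ) : Prop :=
  (∀ w ∈ M.Lstar, w.length ≤ k) ∧ ∃ w ∈ M.Lstar, w.length = k

end NA

/-- Projection of an automaton over `I × O` to the alphabet `I`. -/
def NA.projI {Q I O : Type*} [Nonempty O] (M : NA Q (I × O)) : NA Q I where
  init := M.init
  trans q a := ⋃ b : O, M.trans q (a, b)
  accept := M.accept
  complete q a := by
    obtain ⟨b⟩ := ‹Nonempty O›
    obtain ⟨q', hq'⟩ := M.complete q (a, b)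
    exact ⟨q', Set.mem_iUnion.2 ⟨b, hq'⟩⟩

/-- Deterministic parity automata. -/
structure DPA (Q A : Type*) where
  init : Q
  trans : Q → A → Q
  color : Q → ℕ

/-- The maximal value occurring infinitely often in the sequence `c` exists
and is even. -/
def MaxEvenInf (c : ℕ → ℕ) : Prop :=
  ∃ k, Even k ∧ {n | c n = k}.Infinite ∧ ∀ k', {n | c n = k'}.Infinite → k' ≤ k

/-- Deterministic finite automata (acceptors for finite words). -/
structure DFAcc (S A : Type*) where
  init : S
  trans : S → A → S
  accept : Set S

/-- The language of finite words accepted by a DFA. -/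
def DFAcc.lang {S A : Type*} (D : DFAcc S A) : Set (List A) :=
  {w | w.foldl D.trans D.init ∈ D.accept}

namespace DPA

variable {Q A : Type*} (M : DPA Q A)

/-- The unique run of a deterministic automaton on an ω-word. -/
def run (x : ℕ → A) : ℕ → Q
  | 0 => M.init
  | n + 1 => M.trans (run x n) (x n)

/-- The parity language of `M`: the maximal color visited infinitely often is even. -/
def Lparity : Set (ℕ → A) := {x | MaxEvenInf fun n => M.color (M.run x n)}

/-- The number of colors of `M`. -/
def numColors [Fintype Q] : ℕ := (Finset.image M.color Finset.univ).card

end DPA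

namespace DPA

variable {Q I O : Type*} (M : DPA Q (I × O))

/-- The transition function of the color-tracking automaton `𝒞`. -/
def transC (qc : Q × ℕ) (x : I × O) : Q × ℕ :=
  (M.trans qc.1 x, max qc.2 (M.color (M.trans qc.1 x)))

/-- The initial state of the color-tracking automaton `𝒞`. -/
def initC : Q × ℕ := (M.init, M.color M.init)

/-- The valid states of `𝒞`, i.e. `Q × Ω(Q)`. -/
def QCvalid : Set (Q × ℕ) := {qc | qc.2 ∈ Set.range M.color}

/-- One step of the powerset automaton of the projection of `𝒞`. -/
def transP (S : Set (Q × ℕ)) (a : I) : Set (Q × ℕ) :=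
  ⋃ s ∈ S, ⋃ b : O, {M.transC s (a, b)}

/-- Iterated powerset transitions `δ_P^*`. -/
def transPStar (S : Set (Q × ℕ)) (w : List I) : Set (Q × ℕ) :=
  w.foldl M.transP S

/-- The domain of a partial function, represented via `Option`. -/
def rdom {Q : Type*} (r : (Q × ℕ) → Option (Set (Q × ℕ))) : Set (Q × ℕ) :=
  {qc | r qc ≠ none}

open scoped Classical in
/-- The partial function `r_w^D` with domain `D`. -/
noncomputable def rOf (D : Set (Q × ℕ)) (w : List I) :
    (Q × ℕ) → Option (Set (Q × ℕ)) :=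
  fun qc =>
    if qc ∈ D then some (M.transPStar ({(qc.1, M.color qc.1)} : Set (Q × ℕ)) w)
    else none

/-- The set `W_r` of witnesses of a partial function `r`. -/
def WitnessSet (r : (Q × ℕ) → Option (Set (Q × ℕ))) : Set (List I) :=
  {w | r = M.rOf (rdom r) w}

/-- The set `𝔉` of partial functions with nonempty domain and infinitely many
witnesses. -/
def Frak : Set ((Q × ℕ) → Option (Set (Q × ℕ))) :=
  {r | (rdom r).Nonempty ∧ (M.WitnessSet r).Infinite}

end DPA

end DelayGames

namespace DelayGames

/-! ### Iterated powerset transitions -/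

namespace DPA

variable {Q I O : Type*} (M : DPA Q (I × O))

theorem mem_transP {S : Set (Q × ℕ)} {a : I} {t : Q × ℕ} :
    t ∈ M.transP S a ↔ ∃ s ∈ S, ∃ b, t = M.transC s (a, b) := by
  simp [transP, eq_comm]

@[simp] theorem transPStar_nil (S : Set (Q × ℕ)) : M.transPStar S [] = S := rfl

@[simp] theorem transPStar_cons (S : Set (Q × ℕ)) (a : I) (w : List I) :
    M.transPStar S (a :: w) = M.transPStar (M.transP S a) w := rfl

theorem transPStar_append (S : Set (Q × ℕ)) (u v : List I) :
    M.transPStar S (u ++ v) = M.transPStar (M.transPStar S u) v := by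
  simp [transPStar, List.foldl_append]

theorem mem_transPStar {w : List I} : ∀ {S : Set (Q × ℕ)} {t : Q × ℕ},
    t ∈ M.transPStar S w ↔ ∃ s ∈ S, t ∈ M.transPStar {s} w := by
  induction w with
  | nil => simp
  | cons a w ih =>
    intro S t
    simp only [transPStar_cons]
    rw [ih]
    constructor
    · rintro ⟨s', hs', ht⟩
      obtain ⟨s, hs, b, rfl⟩ := M.mem_transP.1 hs'
      refine ⟨s, hs, ih.2 ⟨_, M.mem_transP.2 ⟨s, rfl, b, rfl⟩, ht⟩⟩
    · rintro ⟨s, hs, ht⟩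
      obtain ⟨s', hs', ht'⟩ := ih.1 ht
      obtain ⟨s1, hs1, b, rfl⟩ := M.mem_transP.1 hs'
      rw [Set.mem_singleton_iff] at hs1
      subst hs1
      exact ⟨_, M.mem_transP.2 ⟨_, hs, b, rfl⟩, ht'⟩

theorem transPStar_union (A B : Set (Q × ℕ)) (w : List I) :
    M.transPStar (A ∪ B) w = M.transPStar A w ∪ M.transPStar B w := by
  ext t
  rw [Set.mem_union, M.mem_transPStar (S := A), M.mem_transPStar (S := B),
    M.mem_transPStar (S := A ∪ B)]
  constructor
  · rintro ⟨s, hs | hs, h⟩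
    · exact Or.inl ⟨s, hs, h⟩
    · exact Or.inr ⟨s, hs, h⟩
  · rintro (⟨s, hs, h⟩ | ⟨s, hs, h⟩)
    · exact ⟨s, Or.inl hs, h⟩
    · exact ⟨s, Or.inr hs, h⟩

/-- The map raising every recorded color to at least `c`. -/
def raise (c : ℕ) (s : Q × ℕ) : Q × ℕ := (s.1, max c s.2)

theorem transPStar_raise (c : ℕ) (w : List I) : ∀ (S : Set (Q × ℕ)),
    M.transPStar (raise c '' S) w = raise c '' M.transPStar S w := by
  induction w with
  | nil => simp
  | cons a w ih =>
    intro S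
    simp only [transPStar_cons]
    rw [← ih]
    congr 1
    ext t
    simp only [mem_transP, Set.mem_image]
    constructor
    · rintro ⟨_, ⟨s, hs, rfl⟩, b, rfl⟩
      exact ⟨_, ⟨s, hs, b, rfl⟩, by simp [raise, transC, max_assoc]⟩
    · rintro ⟨_, ⟨s, hs, b, rfl⟩, rfl⟩
      exact ⟨_, ⟨s, hs, rfl⟩, b, by simp [raise, transC, max_assoc]⟩

/-- The state–color pairs reachable from the state `q` by reading `w`; the color is the
largest one on the way, `q` itself included. -/
def rr (w : List I) (q : Q) : Set (Q × ℕ) := M.transPStar {(q, M.color q)} w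

/-- The recorded colors are colors of the automaton and at least the color of their state. -/
def Valid (A : Set (Q × ℕ)) : Prop :=
  ∀ q c, (q, c) ∈ A → c ∈ Set.range M.color ∧ M.color q ≤ c

theorem Valid.transP {A : Set (Q × ℕ)} (h : M.Valid A) (a : I) : M.Valid (M.transP A a) := by
  intro q c hq
  obtain ⟨⟨q0, c0⟩, hs, b, ht⟩ := M.mem_transP.1 hq
  obtain ⟨⟨q1, hq1⟩, -⟩ := h _ _ hs
  simp only [transC, Prod.mk.injEq] at ht
  obtain ⟨rfl, rfl⟩ := ht
  refine ⟨?_, le_max_right _ _⟩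
  rcases max_choice c0 (M.color (M.trans q0 (a, b))) with h | h <;> rw [h]
  · exact ⟨_, hq1⟩
  · exact ⟨_, rfl⟩

theorem Valid.transPStar {A : Set (Q × ℕ)} (h : M.Valid A) (w : List I) :
    M.Valid (M.transPStar A w) := by
  induction w generalizing A with
  | nil => exact h
  | cons a w ih => exact ih (Valid.transP M h a)

theorem valid_rr (w : List I) (q : Q) : M.Valid (M.rr w q) := by
  refine Valid.transPStar M ?_ w
  intro q' c h
  simp only [Set.mem_singleton_iff, Prod.mk.injEq] at h
  obtain ⟨rfl, rfl⟩ := h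
  exact ⟨⟨_, rfl⟩, le_rfl⟩

theorem raise_rr {q : Q} {c : ℕ} (h : M.color q ≤ c) (w : List I) :
    raise c '' M.rr w q = M.transPStar {(q, c)} w := by
  rw [rr, ← transPStar_raise]
  simp [raise, h]

end DPA

/-! ### The preference order on colors and domination -/

/-- Player O's preference among colors: large even colors are best, large odd colors worst. -/
def pref (c : ℕ) : ℤ := if Even c then c else -c

theorem pref_injective : Function.Injective pref := by
  intro a b h
  unfold pref at h
  split_ifs at h with h1 h2 h2
  · exact_mod_cast h
  · have : a = 0 ∧ b = 0 := by omega
    omega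
  · have : a = 0 ∧ b = 0 := by omega
    omega
  · omega

theorem pref_max {c d : ℕ} (h : pref c ≤ pref d) (e : ℕ) :
    pref (max c e) ≤ pref (max d e) := by
  simp only [pref, Nat.even_iff] at *
  rcases le_total c e with h1 | h1 <;> rcases le_total d e with h2 | h2 <;>
    simp only [max_eq_left, max_eq_right, h1, h2] <;> split_ifs at * <;> omega

variable {Q I O : Type*}

/-- `B` dominates `A`: every pair in `A` is matched by a pair in `B` with the same state and a
color that Player O likes at least as much. -/
def Dom (A B : Set (Q × ℕ)) : Prop :=
  ∀ q c, (q, c) ∈ A → ∃ c', (q, c') ∈ B ∧ pref c ≤ pref c'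

theorem Dom.of_subset {A B : Set (Q × ℕ)} (h : A ⊆ B) : Dom A B :=
  fun _ c hq => ⟨c, h hq, le_rfl⟩

theorem Dom.refl (A : Set (Q × ℕ)) : Dom A A := Dom.of_subset subset_rfl

theorem Dom.trans {A B C : Set (Q × ℕ)} (h1 : Dom A B) (h2 : Dom B C) : Dom A C := by
  intro q c h
  obtain ⟨c1, h3, h4⟩ := h1 q c h
  obtain ⟨c2, h5, h6⟩ := h2 q c1 h3
  exact ⟨c2, h5, h4.trans h6⟩

theorem Dom.transPStar (M : DPA Q (I × O)) {A B : Set (Q × ℕ)} (h : Dom A B) (w : List I) :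
    Dom (M.transPStar A w) (M.transPStar B w) := by
  induction w generalizing A B with
  | nil => exact h
  | cons a w ih =>
    apply ih
    intro q c hq
    obtain ⟨⟨q0, c0⟩, hs, b, ht⟩ := M.mem_transP.1 hq
    obtain ⟨c1, h1, h2⟩ := h _ _ hs
    simp only [DPA.transC, Prod.mk.injEq] at ht
    obtain ⟨rfl, rfl⟩ := ht
    exact ⟨_, M.mem_transP.2 ⟨_, h1, b, rfl⟩, pref_max h2 _⟩

/-! ### Progress measures -/

universe u

/-- On the components `≥ c`, `θ'` is lexicographically below `θ` (larger indices are more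
significant); the deciding component is below `B`. -/
def LtAt (B c : ℕ) (θ' θ : ℕ → Ordinal.{u}) : Prop :=
  ∃ j, c ≤ j ∧ j < B ∧ θ' j < θ j ∧ ∀ i, j < i → θ' i = θ i

/-- `θ'` and `θ` agree on the components `≥ c`. -/
def EqAt (c : ℕ) (θ' θ : ℕ → Ordinal.{u}) : Prop := ∀ i, c ≤ i → θ' i = θ i

/-- The progress condition for a run segment of maximal color `c`: the measure does not increase
on the components `≥ c`, and it decreases there strictly if `c` is odd. -/
def Adv (B c : ℕ) (θ' θ : ℕ → Ordinal.{u}) : Prop :=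
  LtAt B c θ' θ ∨ (Even c ∧ EqAt c θ' θ)

theorem LtAt.shift {B c : ℕ} {θ' θ : ℕ → Ordinal.{u}} (h : LtAt B c θ' θ) (d : ℕ) :
    LtAt B d θ' θ ∨ EqAt d θ' θ := by
  obtain ⟨j, h1, h2, h3, h4⟩ := h
  rcases le_or_gt d j with h | h
  · exact Or.inl ⟨j, h, h2, h3, h4⟩
  · exact Or.inr fun i hi => h4 i (h.trans_le hi)

theorem LtAt.mono {B c d : ℕ} {θ' θ : ℕ → Ordinal.{u}} (h : LtAt B c θ' θ) (hd : d ≤ c) :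
    LtAt B d θ' θ := by
  obtain ⟨j, h1, h2⟩ := h
  exact ⟨j, hd.trans h1, h2⟩

theorem EqAt.mono {c d : ℕ} {θ' θ : ℕ → Ordinal.{u}} (h : EqAt c θ' θ) (hd : c ≤ d) :
    EqAt d θ' θ := fun i hi => h i (hd.trans hi)

theorem Adv.shift {B c d : ℕ} {θ' θ : ℕ → Ordinal.{u}} (h : Adv B c θ' θ) (hd : c ≤ d) :
    LtAt B d θ' θ ∨ EqAt d θ' θ := by
  rcases h with h | ⟨-, h⟩
  · exact h.shift d
  · exact Or.inr (h.mono hd)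

theorem Adv.of_pref {B c d : ℕ} {θ' θ : ℕ → Ordinal.{u}} (h : Adv B c θ' θ)
    (hd : pref c ≤ pref d) : Adv B d θ' θ := by
  unfold pref at hd
  by_cases hde : Even d
  · rcases h with h | ⟨hc, h⟩
    · rcases h.shift d with h | h
      · exact Or.inl h
      · exact Or.inr ⟨hde, h⟩
    · simp only [hde, hc, if_true] at hd
      exact Or.inr ⟨hde, h.mono (by exact_mod_cast hd)⟩
  · rcases h with h | ⟨hc, h⟩
    · by_cases hc : Even c
      · simp only [hde, hc, if_true, if_false] at hd
        have : d = 0 := by omega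
        subst this
        simp at hde
      · simp only [hde, hc, if_false] at hd
        exact Or.inl (h.mono (by omega))
    · simp only [hde, hc, if_true, if_false] at hd
      have : d = 0 := by omega
      subst this
      simp at hde

theorem LtAt.comp {B m : ℕ} {θ1 θ2 θ3 : ℕ → Ordinal.{u}} (h : LtAt B m θ3 θ2)
    (h' : LtAt B m θ2 θ1) : LtAt B m θ3 θ1 := by
  obtain ⟨j, h1, h2, h3, h4⟩ := h
  obtain ⟨j', h1', h2', h3', h4'⟩ := h'
  rcases lt_trichotomy j j' with hj | rfl | hj
  · exact ⟨j', h1', h2', (h4 j' hj).trans_lt h3', fun i hi =>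
      (h4 i (hj.trans hi)).trans (h4' i hi)⟩
  · exact ⟨j, h1, h2, h3.trans h3', fun i hi => (h4 i hi).trans (h4' i hi)⟩
  · exact ⟨j, h1, h2, h3.trans_eq (h4' j hj), fun i hi =>
      (h4 i hi).trans (h4' i (hj.trans hi))⟩

theorem LtAt.comp_eq {B m : ℕ} {θ1 θ2 θ3 : ℕ → Ordinal.{u}} (h : LtAt B m θ3 θ2)
    (h' : EqAt m θ2 θ1) : LtAt B m θ3 θ1 := by
  obtain ⟨j, h1, h2, h3, h4⟩ := h
  exact ⟨j, h1, h2, h3.trans_eq (h' j h1), fun i hi => (h4 i hi).trans (h' i (h1.trans hi.le))⟩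

theorem EqAt.comp_lt {B m : ℕ} {θ1 θ2 θ3 : ℕ → Ordinal.{u}} (h : EqAt m θ3 θ2)
    (h' : LtAt B m θ2 θ1) : LtAt B m θ3 θ1 := by
  obtain ⟨j, h1, h2, h3, h4⟩ := h'
  exact ⟨j, h1, h2, (h j h1).trans_lt h3, fun i hi => (h i (h1.trans hi.le)).trans (h4 i hi)⟩

theorem Adv.merge {B c c' : ℕ} {θ1 θ2 θ3 : ℕ → Ordinal.{u}} (h : Adv B c' θ3 θ2)
    (h' : Adv B c θ2 θ1) : Adv B (max c c') θ3 θ1 := by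
  have key : ∀ m, c ≤ m → c' ≤ m → (c = m ∨ c' = m) → Adv B m θ3 θ1 := by
    intro m hc hc' hm
    rcases h.shift hc' with h1 | h1 <;> rcases h'.shift hc with h2 | h2
    · exact Or.inl (h1.comp h2)
    · exact Or.inl (h1.comp_eq h2)
    · exact Or.inl (h1.comp_lt h2)
    · rcases hm with rfl | rfl
      · rcases h' with h' | ⟨he, h'⟩
        · exact Or.inl (h1.comp_lt h')
        · exact Or.inr ⟨he, fun i hi => (h1 i hi).trans (h2 i hi)⟩
      · rcases h with h | ⟨he, h⟩
        · exact Or.inl (h.comp_eq h2)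
        · exact Or.inr ⟨he, fun i hi => (h1 i hi).trans (h2 i hi)⟩
  refine key _ (le_max_left _ _) (le_max_right _ _) ?_
  rcases max_choice c c' with h | h
  · exact Or.inl h.symm
  · exact Or.inr h.symm

/-- A sequence of measures progressing along the colors `c n` cannot exist if the largest color
occurring infinitely often is odd: by downward induction on `d ≥ K`, all components `≥ d`
become constant eventually, which contradicts the strict decrease caused by `K`. -/
theorem no_descent {B K : ℕ} {c : ℕ → ℕ} {θ : ℕ → ℕ → Ordinal.{u}}
    (hadv : ∀ n, Adv B (c n) (θ (n + 1)) (θ n)) (hK : ¬ Even K)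
    (hle : ∃ n0, ∀ n, n0 ≤ n → c n ≤ K) (hinf : ∀ n0, ∃ n, n0 ≤ n ∧ c n = K) : False := by
  obtain ⟨n0, hn0⟩ := hle
  have key : ∀ m, m ≤ max B K - K → ∃ n1, n0 ≤ n1 ∧ ∀ n, n1 ≤ n → ∀ i, max B K - m ≤ i →
      θ (n + 1) i = θ n i := by
    intro m
    induction m with
    | zero =>
      intro _
      refine ⟨n0, le_rfl, fun n hn i hi => ?_⟩
      rcases hadv n with ⟨j, h1, h2, h3, h4⟩ | ⟨_, h⟩
      · exact h4 i (by omega)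
      · exact h i ((hn0 n hn).trans (by omega))
    | succ m ih =>
      intro hm
      obtain ⟨n1, hn1, h⟩ := ih (by omega)
      set d := max B K - (m + 1) with hd
      have hstep : ∀ n, n1 ≤ n → θ (n + 1) d ≤ θ n d := by
        intro n hn
        have hc := hn0 n (hn1.trans hn)
        rcases hadv n with ⟨j, h1, h2, h3, h4⟩ | ⟨_, h'⟩
        · rcases lt_trichotomy j d with hj | rfl | hj
          · exact (h4 d hj).le
          · exact h3.le
          · exact absurd (h n hn j (by omega)) h3.ne
        · exact (h' d (by omega)).le
      have hg : Antitone fun n => θ (n1 + n) d :=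
        antitone_nat_of_succ_le fun n => hstep (n1 + n) (by omega)
      obtain ⟨n2, hn2⟩ := WellFoundedLT.antitone_chain_condition hg
      refine ⟨n1 + n2, by omega, fun n hn i hi => ?_⟩
      rcases eq_or_lt_of_le hi with rfl | hi
      · have e1 := hn2 (n - n1) (by omega)
        have e2 := hn2 (n + 1 - n1) (by omega)
        rw [show n1 + (n - n1) = n by omega] at e1
        rw [show n1 + (n + 1 - n1) = n + 1 by omega] at e2
        rw [← e1, ← e2]
      · exact h n (by omega) i (by omega)
  obtain ⟨n1, hn1, h⟩ := key _ le_rfl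
  obtain ⟨n, hn, hcn⟩ := hinf n1
  rcases hadv n with ⟨j, h1, h2, h3, h4⟩ | ⟨he, _⟩
  · exact absurd (h n hn j (by omega)) h3.ne
  · rw [hcn] at he
    exact hK he

end DelayGames

namespace DelayGames

/-! ### The winning family of a set of state–color pairs -/

universe u

variable {Q I O : Type*} (M : DPA Q (I × O))

/-- Closedness of a relation `R` between sets of state–color pairs and measures: whenever
`R S θ`, then after every sufficiently long further block `w` of input letters Player O can
commit to some `(q, c) ∈ S` such that `R` holds of the pairs reachable from `q` via `w` and a
measure that has progressed with respect to `c`. -/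
def Closed (B : ℕ) (R : Set (Q × ℕ) → (ℕ → Ordinal.{u}) → Prop) : Prop :=
  ∀ S θ, R S θ → ∃ N, ∀ w : List I, N ≤ w.length →
    ∃ q c, (q, c) ∈ S ∧ ∃ ϑ, Adv B c ϑ θ ∧ R (M.rr w q) ϑ

/-- The largest closed relation. -/
def Win (B : ℕ) (S : Set (Q × ℕ)) (θ : ℕ → Ordinal.{u}) : Prop :=
  ∃ R, Closed M B R ∧ R S θ

/-- `S` is winning with a measure that has progressed from `θ` with respect to `c`. -/
def WinAdv (B c : ℕ) (θ : ℕ → Ordinal.{u}) (S : Set (Q × ℕ)) : Prop :=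
  ∃ θ', Adv B c θ' θ ∧ Win M B S θ'

variable {M} {B : ℕ}

theorem Win.step {S : Set (Q × ℕ)} {θ : ℕ → Ordinal.{u}} (h : Win M B S θ) :
    ∃ N, ∀ w : List I, N ≤ w.length → ∃ q c, (q, c) ∈ S ∧ WinAdv M B c θ (M.rr w q) := by
  obtain ⟨R, hR, hS⟩ := h
  obtain ⟨N, hN⟩ := hR S θ hS
  refine ⟨N, fun w hw => ?_⟩
  obtain ⟨q, c, h1, θ', h2, h3⟩ := hN w hw
  exact ⟨q, c, h1, θ', h2, R, hR, h3⟩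

theorem Win.dom {S S' : Set (Q × ℕ)} {θ : ℕ → Ordinal.{u}} (h : Win M B S θ) (hd : Dom S S') :
    Win M B S' θ := by
  refine ⟨fun S' θ => ∃ S, Win M B S θ ∧ Dom S S', ?_, S, h, hd⟩
  rintro S' θ ⟨S, hS, hd⟩
  obtain ⟨N, hN⟩ := hS.step
  refine ⟨N, fun w hw => ?_⟩
  obtain ⟨q, c, h1, θ', h2, h3⟩ := hN w hw
  obtain ⟨c', h4, h5⟩ := hd q c h1
  exact ⟨q, c', h4, θ', h2.of_pref h5, _, h3, Dom.refl _⟩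

theorem Win.raise {S : Set (Q × ℕ)} {θ1 θ2 : ℕ → Ordinal.{u}} {c : ℕ} (h : Win M B S θ2)
    (hc : Adv B c θ2 θ1) : Win M B (DPA.raise c '' S) θ1 := by
  refine ⟨fun S' θ1 => Win M B S' θ1 ∨ ∃ S θ2 c, Win M B S θ2 ∧ Adv B c θ2 θ1 ∧
    S' = DPA.raise c '' S, ?_, Or.inr ⟨S, θ2, c, h, hc, rfl⟩⟩
  rintro S' θ1 (hS | ⟨S, θ2, c, hS, hc, rfl⟩)
  · obtain ⟨N, hN⟩ := hS.step
    refine ⟨N, fun w hw => ?_⟩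
    obtain ⟨q, c, h1, θ', h2, h3⟩ := hN w hw
    exact ⟨q, c, h1, θ', h2, Or.inl h3⟩
  · obtain ⟨N, hN⟩ := hS.step
    refine ⟨N, fun w hw => ?_⟩
    obtain ⟨q, c', h1, θ', h2, h3⟩ := hN w hw
    exact ⟨q, max c c', ⟨_, h1, rfl⟩, θ', h2.merge hc, Or.inl h3⟩

theorem not_win_empty [Nonempty I] (θ : ℕ → Ordinal.{u}) : ¬ Win M B ∅ θ := by
  intro h
  obtain ⟨N, hN⟩ := h.step
  obtain ⟨a⟩ := ‹Nonempty I›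
  obtain ⟨q, c, h, -⟩ := hN (List.replicate N a) (by simp)
  exact h

theorem WinAdv.dom {S S' : Set (Q × ℕ)} {θ : ℕ → Ordinal.{u}} {c : ℕ}
    (h : WinAdv M B c θ S) (hd : Dom S S') : WinAdv M B c θ S' := by
  obtain ⟨θ', h1, h2⟩ := h
  exact ⟨θ', h1, h2.dom hd⟩

theorem WinAdv.of_pref {S : Set (Q × ℕ)} {θ : ℕ → Ordinal.{u}} {c c' : ℕ}
    (h : WinAdv M B c θ S) (hd : pref c ≤ pref c') : WinAdv M B c' θ S := by
  obtain ⟨θ', h1, h2⟩ := h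
  exact ⟨θ', h1.of_pref hd, h2⟩

/-- A winning set of pairs can be reduced to one of its pairs once a long enough continuation
is known, without using up any progress. -/
theorem WinAdv.select {A : Set (Q × ℕ)} {θ : ℕ → Ordinal.{u}} {c : ℕ} (hA : M.Valid A)
    (h : WinAdv M B c θ A) : ∃ N, ∀ y : List I, N ≤ y.length →
      ∃ s ∈ A, WinAdv M B c θ (M.transPStar {s} y) := by
  obtain ⟨θ', h1, h2⟩ := h
  obtain ⟨N, hN⟩ := h2.step
  refine ⟨N, fun y hy => ?_⟩
  obtain ⟨q, c', h3, θ'', h4, h5⟩ := hN y hy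
  refine ⟨(q, c'), h3, θ', h1, ?_⟩
  rw [← M.raise_rr (hA _ _ h3).2]
  exact h5.raise h4

/-! ### Pumping -/

/-- If words with equal codes act equivalently on the sets `A i`, then a word at least as long
as the number of codes can be pumped: it dominates arbitrarily long words on all the `A i`. -/
theorem pump {ι E : Type*} [Fintype E] (A : ι → Set (Q × ℕ)) (code : List I → E)
    (hcode : ∀ u v, code u = code v → ∀ i, Dom (M.transPStar (A i) u) (M.transPStar (A i) v))
    (x : List I) (hx : Fintype.card E ≤ x.length) (N : ℕ) :
    ∃ y : List I, N ≤ y.length ∧ ∀ i, Dom (M.transPStar (A i) y) (M.transPStar (A i) x) := by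
  suffices h : ∃ y : List I, x.length + N ≤ y.length ∧
      ∀ i, Dom (M.transPStar (A i) y) (M.transPStar (A i) x) by
    obtain ⟨y, h1, h2⟩ := h
    exact ⟨y, by omega, h2⟩
  induction N with
  | zero => exact ⟨x, by simp, fun i => Dom.refl _⟩
  | succ N ih =>
    obtain ⟨y, hy, hd⟩ := ih
    obtain ⟨i, j, hij, he⟩ := Fintype.exists_ne_map_eq_of_card_lt
      (fun i : Fin (Fintype.card E + 1) => code (y.take i)) (by simp)
    wlog hlt : i < j generalizing i j
    · exact this j i hij.symm he.symm (lt_of_le_of_ne (not_lt.1 hlt) hij.symm)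
    refine ⟨y.take j ++ y.drop i, ?_, fun t => ?_⟩
    · have := j.2
      have : (i : ℕ) < j := hlt
      simp only [List.length_append, List.length_take, List.length_drop]
      omega
    · refine Dom.trans ?_ (hd t)
      conv_rhs => rw [← List.take_append_drop i y]
      rw [M.transPStar_append, M.transPStar_append]
      exact (hcode _ _ he.symm t).transPStar M _

/-! ### Selecting a single state -/

variable (M) in
/-- The pairs of a state in `H` and its own color. -/
def start (H : Set Q) : Set (Q × ℕ) := {s | s.1 ∈ H ∧ s.2 = M.color s.1}

theorem valid_start (H : Set Q) : M.Valid (start M H) := by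
  rintro q c ⟨-, h⟩
  simp only at h
  subst h
  exact ⟨⟨q, rfl⟩, le_rfl⟩

theorem start_singleton (q : Q) : start M {q} = {(q, M.color q)} := by
  ext ⟨p, c⟩
  simp only [start, Set.mem_singleton_iff, Set.mem_ofPred_eq, Prod.mk.injEq]
  constructor
  · rintro ⟨rfl, h⟩; exact ⟨rfl, h⟩
  · rintro ⟨rfl, h⟩; exact ⟨rfl, h⟩

theorem transPStar_empty (w : List I) : M.transPStar ∅ w = ∅ := by
  ext t
  rw [M.mem_transPStar]
  simp

section Codes

variable [Fintype Q]

variable (M) in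
/-- The set of colors of the automaton. -/
def colors : Finset ℕ := Finset.image M.color Finset.univ

theorem mem_colors {c : ℕ} : c ∈ colors M ↔ c ∈ Set.range M.color := by
  simp [colors]

open scoped Classical in
variable (M) in
/-- The colors `c` such that `A` contains `q` with a color at least as good as `c`. -/
noncomputable def dcl (A : Set (Q × ℕ)) (q : Q) : Finset ℕ :=
  (colors M).filter fun c => ∃ c', (q, c') ∈ A ∧ pref c ≤ pref c'

theorem mem_dcl {A : Set (Q × ℕ)} {q : Q} {c : ℕ} :
    c ∈ dcl M A q ↔ c ∈ colors M ∧ ∃ c', (q, c') ∈ A ∧ pref c ≤ pref c' := by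
  simp [dcl]

theorem card_dcl_le (A : Set (Q × ℕ)) (q : Q) : (dcl M A q).card ≤ M.numColors :=
  Finset.card_le_card fun _ hc => (mem_dcl.1 hc).1

/-- Since the sets `dcl M A q` form a chain, domination can be read off their sizes. -/
theorem dom_of_card {A A' : Set (Q × ℕ)} (hA : M.Valid A)
    (h : ∀ q, (dcl M A q).card ≤ (dcl M A' q).card) : Dom A A' := by
  intro q c hq
  have hc : c ∈ dcl M A q := mem_dcl.2 ⟨mem_colors.2 (hA q c hq).1, c, hq, le_rfl⟩
  by_cases hc' : c ∈ dcl M A' q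
  · exact (mem_dcl.1 hc').2
  · exfalso
    refine absurd (h q) (not_le.2 (Finset.card_lt_card ?_))
    refine (Finset.ssubset_iff_of_subset fun d hd => ?_).2 ⟨c, hc, hc'⟩
    obtain ⟨h1, d', h2, h3⟩ := mem_dcl.1 hd
    refine mem_dcl.2 ⟨h1, c, hq, ?_⟩
    by_contra hlt
    exact hc' (mem_dcl.2 ⟨(mem_dcl.1 hc).1, d', h2, (not_le.1 hlt).le.trans h3⟩)

theorem dcl_mono {A A' : Set (Q × ℕ)} (h : A ⊆ A') (q : Q) : dcl M A q ⊆ dcl M A' q := by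
  intro c hc
  obtain ⟨h1, c', h2, h3⟩ := mem_dcl.1 hc
  exact mem_dcl.2 ⟨h1, c', h h2, h3⟩

variable (M) in
/-- The number of pairs of codes `Q → {0, …, k}`. -/
def beta : ℕ := (M.numColors + 1) ^ Fintype.card Q * (M.numColors + 1) ^ Fintype.card Q

/-- If neither `A₁` nor `A₂` is winning after reading a long word `v`, then their union is not
winning either. -/
theorem not_winAdv_union {A₁ A₂ : Set (Q × ℕ)} (h₁ : M.Valid A₁) (h₂ : M.Valid A₂) {v : List I}
    (hv : beta M ≤ v.length) {θ : ℕ → Ordinal.{u}} {c : ℕ}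
    (hn₁ : ¬ WinAdv M B c θ (M.transPStar A₁ v)) (hn₂ : ¬ WinAdv M B c θ (M.transPStar A₂ v)) :
    ¬ WinAdv M B c θ (A₁ ∪ A₂) := by
  classical
  intro h
  have hval : M.Valid (A₁ ∪ A₂) := by
    rintro q c (hq | hq)
    · exact h₁ q c hq
    · exact h₂ q c hq
  obtain ⟨N, hN⟩ := h.select hval
  let cd : Set (Q × ℕ) → Q → Fin (M.numColors + 1) := fun A q =>
    ⟨(dcl M A q).card, Nat.lt_succ_of_le (card_dcl_le A q)⟩
  have hcd : ∀ A A', M.Valid A → cd A = cd A' → Dom A A' := by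
    intro A A' hA h
    refine dom_of_card hA fun q => ?_
    have := congrArg Fin.val (congrFun h q)
    exact this.le
  obtain ⟨y, hy, hd⟩ := pump (M := M) (fun b : Bool => if b then A₁ else A₂)
    (fun u => (cd (M.transPStar A₁ u), cd (M.transPStar A₂ u))) (by
      intro u v huv b
      rw [Prod.mk.injEq] at huv
      cases b
      · exact hcd _ _ (DPA.Valid.transPStar M h₂ u) huv.2
      · exact hcd _ _ (DPA.Valid.transPStar M h₁ u) huv.1) v (by
      simpa [beta] using hv) N
  obtain ⟨s, hs, hw⟩ := hN y hy
  rcases hs with hs | hs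
  · have : Dom ({s} : Set (Q × ℕ)) A₁ := Dom.of_subset (by simpa using hs)
    exact hn₁ ((hw.dom (this.transPStar M y)).dom (hd true))
  · have : Dom ({s} : Set (Q × ℕ)) A₂ := Dom.of_subset (by simpa using hs)
    exact hn₂ ((hw.dom (this.transPStar M y)).dom (hd false))

/-- Iterating `not_winAdv_union`: knowing `m * beta M` further letters, one can reduce the
states in `H`, at most `m` many, to a single one. -/
theorem not_winAdv_start [Nonempty I] {θ : ℕ → Ordinal.{u}} {c : ℕ} (m : ℕ) :
    ∀ (u v : List I) (H : Finset Q), H.card ≤ m → v.length = m * beta M →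
      (∀ q ∈ H, ¬ WinAdv M B c θ (M.rr (u ++ v) q)) →
      ¬ WinAdv M B c θ (M.transPStar (start M H) u) := by
  classical
  have hempty : ∀ u : List I, ¬ WinAdv M B c θ (M.transPStar (start M (∅ : Finset Q)) u) := by
    rintro u ⟨θ', -, h⟩
    have : start M (∅ : Finset Q) = ∅ := by
      ext s
      simp [start]
    rw [this, transPStar_empty] at h
    exact not_win_empty _ h
  induction m with
  | zero =>
    intro u v H hH _ _
    rw [Finset.card_eq_zero.1 (Nat.le_zero.1 hH)]
    exact hempty u
  | succ m ih =>
    intro u v H hH hv hn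
    rcases H.eq_empty_or_nonempty with rfl | ⟨s, hs⟩
    · exact hempty u
    set v1 := v.take (beta M) with hv1
    set v2 := v.drop (beta M) with hv2
    have hvv : v1 ++ v2 = v := List.take_append_drop _ _
    have hl1 : v1.length = beta M := by
      rw [hv1, List.length_take, hv, Nat.succ_mul]
      omega
    have hl2 : v2.length = m * beta M := by
      rw [hv2, List.length_drop, hv, Nat.succ_mul]
      omega
    have hn' : ∀ q ∈ H, ¬ WinAdv M B c θ (M.rr ((u ++ v1) ++ v2) q) := by
      intro q hq
      rw [List.append_assoc, hvv]
      exact hn q hq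
    have e1 := ih (u ++ v1) v2 (H.erase s) (by
      rw [Finset.card_erase_of_mem hs]
      omega) hl2 (fun q hq => hn' q (Finset.mem_of_mem_erase hq))
    have e2 : ¬ WinAdv M B c θ (M.transPStar (start M {s}) (u ++ v1)) := by
      rcases Nat.eq_zero_or_pos m with rfl | hm
      · have : v2 = [] := by
          apply List.eq_nil_of_length_eq_zero
          simpa using hl2
        have := hn' s hs
        rwa [‹v2 = []›, List.append_nil, DPA.rr, ← start_singleton] at this
      · have := ih (u ++ v1) v2 {s} (by
          rw [Finset.card_singleton]
          exact hm) hl2 (fun q hq => by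
          rw [Finset.mem_singleton] at hq
          subst hq
          exact hn' q hs)
        simpa using this
    rw [M.transPStar_append] at e1 e2
    have := not_winAdv_union (DPA.Valid.transPStar M (valid_start _) u)
      (DPA.Valid.transPStar M (valid_start _) u) hl1.ge e1 e2
    rw [← M.transPStar_union] at this
    have hH' : start M (H : Set Q) = start M (H.erase s : Finset Q) ∪ start M {s} := by
      ext ⟨q, d⟩
      simp only [start, Set.mem_ofPred_eq, Set.mem_union, Finset.mem_coe, Finset.mem_erase,
        Set.mem_singleton_iff]
      by_cases hq : q = s
      · subst hq
        simp [hs]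
      · simp [hq]
    rwa [hH']

/-- A function that is strictly decreasing for the preference order is determined by its set
of values. -/
theorem eqOn_of_image_eq {C : Finset ℕ} {g₁ g₂ : ℕ → ℕ}
    (h₁ : ∀ c ∈ C, ∀ d ∈ C, pref c < pref d → g₁ d < g₁ c)
    (h₂ : ∀ c ∈ C, ∀ d ∈ C, pref c < pref d → g₂ d < g₂ c)
    (him : C.image g₁ = C.image g₂) : ∀ c ∈ C, g₁ c = g₂ c := by
  have key : ∀ g : ℕ → ℕ, (∀ c ∈ C, ∀ d ∈ C, pref c < pref d → g d < g c) → ∀ c ∈ C,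
      ((C.image g).filter (· < g c)).card = (C.filter fun d => pref c < pref d).card := by
    intro g hg c hc
    have hiff : ∀ d ∈ C, (g d < g c ↔ pref c < pref d) := by
      intro d hd
      constructor
      · intro h
        by_contra hlt
        rcases lt_or_eq_of_le (not_lt.1 hlt) with h' | h'
        · exact absurd (hg d hd c hc h') (by omega)
        · rw [pref_injective h'] at h
          omega
      · exact hg c hc d hd
    rw [Finset.filter_image, Finset.card_image_of_injOn]
    · congr 1
      exact Finset.filter_congr hiff
    · intro a ha b hb hab
      simp only [Finset.coe_filter, Set.mem_ofPred_eq] at ha hb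
      rcases lt_trichotomy (pref a) (pref b) with h | h | h
      · exact absurd (hg a ha.1 b hb.1 h) (by omega)
      · exact pref_injective h
      · exact absurd (hg b hb.1 a ha.1 h) (by omega)
  intro c hc
  have e : ((C.image g₁).filter (· < g₁ c)).card = ((C.image g₁).filter (· < g₂ c)).card := by
    rw [key g₁ h₁ c hc, him, key g₂ h₂ c hc]
  have m₁ : g₁ c ∈ C.image g₁ := Finset.mem_image_of_mem _ hc
  have m₂ : g₂ c ∈ C.image g₁ := him ▸ Finset.mem_image_of_mem _ hc
  have aux : ∀ (T : Finset ℕ) (a b : ℕ), a ∈ T → a < b →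
      (T.filter (· < a)).card < (T.filter (· < b)).card := by
    intro T a b ha hab
    refine Finset.card_lt_card ((Finset.ssubset_iff_of_subset fun x hx => ?_).2 ⟨a, ?_, ?_⟩)
    · simp only [Finset.mem_filter] at hx ⊢
      exact ⟨hx.1, hx.2.trans hab⟩
    · simp [ha, hab]
    · simp
  rcases lt_trichotomy (g₁ c) (g₂ c) with h | h | h
  · exact absurd e (aux _ _ _ m₁ h).ne
  · exact h
  · exact absurd e (aux _ _ _ m₂ h).ne'

/-- Pumping for a family of sets of states indexed by the colors that grows as the color gets
worse. For a fixed state `q`, the sizes of the sets `dcl` form a monotone sequence of `k` numbers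
in `{0, …, k}`, which is coded by a subset of `{0, …, 2k - 1}`. -/
theorem pump_nested (H : ℕ → Set Q) (hH : ∀ c d, pref c ≤ pref d → H d ⊆ H c) (x : List I)
    (hx : 2 ^ (2 * Fintype.card Q * M.numColors) ≤ x.length) (N : ℕ) :
    ∃ y : List I, N ≤ y.length ∧ ∀ c ∈ colors M,
      Dom (M.transPStar (start M (H c)) y) (M.transPStar (start M (H c)) x) := by
  classical
  let f : List I → Q → ℕ → ℕ := fun u q c => (dcl M (M.transPStar (start M (H c)) u) q).card
  let g : List I → Q → ℕ → ℕ := fun u q c =>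
    ((colors M).filter fun d => pref c < pref d).card + f u q c
  have hf : ∀ u q c d, pref c ≤ pref d → f u q d ≤ f u q c := by
    intro u q c d hcd
    refine Finset.card_le_card (dcl_mono ?_ q)
    intro t ht
    obtain ⟨s, hs, h⟩ := M.mem_transPStar.1 ht
    exact M.mem_transPStar.2 ⟨s, ⟨hH c d hcd hs.1, hs.2⟩, h⟩
  have hg : ∀ u q, ∀ c ∈ colors M, ∀ d ∈ colors M, pref c < pref d → g u q d < g u q c := by
    intro u q c _ d hd hcd
    refine Nat.add_lt_add_of_lt_of_le (Finset.card_lt_card ?_) (hf u q c d hcd.le)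
    refine (Finset.ssubset_iff_of_subset fun e he => ?_).2 ⟨d, ?_, ?_⟩
    · simp only [Finset.mem_filter] at he ⊢
      exact ⟨he.1, hcd.trans he.2⟩
    · simp [hd, hcd]
    · simp
  have hlt : ∀ u q, ∀ c ∈ colors M, g u q c < 2 * M.numColors := by
    intro u q c hc
    have h1 : ((colors M).filter fun d => pref c < pref d).card < M.numColors :=
      Finset.card_lt_card ((Finset.ssubset_iff_of_subset (Finset.filter_subset _ _)).2
        ⟨c, hc, by simp⟩)
    have h2 : f u q c ≤ M.numColors := card_dcl_le _ _
    change _ + _ < _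
    omega
  let code : List I → Q → Finset (Fin (2 * M.numColors)) := fun u q =>
    Finset.univ.filter fun x => ∃ c ∈ colors M, g u q c = x
  obtain ⟨y, hy, hd⟩ := pump (M := M) (fun c : colors M => start M (H c)) code (by
    rintro u v huv ⟨c, hc⟩
    refine dom_of_card (DPA.Valid.transPStar M (valid_start _) u) fun q => ?_
    have hq := congrFun huv q
    have him : ∀ u v, code u q = code v q →
        (colors M).image (g u q) ⊆ (colors M).image (g v q) := by
      intro u v huv x hx
      obtain ⟨d, hd, rfl⟩ := Finset.mem_image.1 hx
      have : (⟨g u q d, hlt u q d hd⟩ : Fin (2 * M.numColors)) ∈ code u q := by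
        simp only [code, Finset.mem_filter, Finset.mem_univ, true_and]
        exact ⟨d, hd, rfl⟩
      rw [huv] at this
      simp only [code, Finset.mem_filter, Finset.mem_univ, true_and] at this
      obtain ⟨e, he, h⟩ := this
      exact Finset.mem_image.2 ⟨e, he, h⟩
    have := eqOn_of_image_eq (hg u q) (hg v q)
      (Finset.Subset.antisymm (him u v hq) (him v u hq.symm)) c hc
    exact (Nat.add_left_cancel this).le) x (by
    refine le_trans (le_of_eq ?_) hx
    rw [Fintype.card_fun, Fintype.card_finset, Fintype.card_fin, ← pow_mul]
    congr 1
    ring) N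
  exact ⟨y, hy, fun c hc => hd ⟨c, hc⟩⟩

variable (M) in
/-- The block length that suffices for one commitment of Player O. -/
def blockLen : ℕ := 2 ^ (2 * Fintype.card Q * M.numColors) + Fintype.card Q * beta M

/-- The bound in `Win.step` can be taken to be `blockLen M`, uniformly in `T` and `θ`. -/
theorem Win.step_blockLen [Nonempty I] {T : Set (Q × ℕ)} (hT : M.Valid T)
    {θ : ℕ → Ordinal.{u}} (h : Win M B T θ) (w : List I) (hw : w.length = blockLen M) :
    ∃ q c, (q, c) ∈ T ∧ WinAdv M B c θ (M.rr w q) := by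
  classical
  by_contra! hcon
  let H : ℕ → Set Q := fun c => {q | ∃ c', (q, c') ∈ T ∧ pref c ≤ pref c'}
  have hH : ∀ c d, pref c ≤ pref d → H d ⊆ H c := by
    rintro c d hcd q ⟨c', h1, h2⟩
    exact ⟨c', h1, hcd.trans h2⟩
  set u := w.take (2 ^ (2 * Fintype.card Q * M.numColors)) with hu
  set v := w.drop (2 ^ (2 * Fintype.card Q * M.numColors)) with hv
  have huv : u ++ v = w := List.take_append_drop _ _
  have hul : u.length = 2 ^ (2 * Fintype.card Q * M.numColors) := by
    rw [hu, List.length_take, hw, blockLen]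
    omega
  have hvl : v.length = Fintype.card Q * beta M := by
    rw [hv, List.length_drop, hw, blockLen]
    omega
  have hneg : ∀ c, ¬ WinAdv M B c θ (M.transPStar (start M (H c)) u) := by
    intro c
    have := not_winAdv_start (M := M) (B := B) (θ := θ) (c := c) (Fintype.card Q) u v
      (H c).toFinset (Finset.card_le_univ _) hvl (by
        intro q hq hwin
        obtain ⟨c', h1, h2⟩ := Set.mem_toFinset.1 hq
        rw [huv] at hwin
        exact hcon q c' h1 (hwin.of_pref h2))
    simpa using this
  obtain ⟨N, hN⟩ := h.step
  obtain ⟨y, hy, hd⟩ := pump_nested (M := M) H hH u hul.ge N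
  obtain ⟨q, c, hq, hwin⟩ := hN y hy
  refine hneg c ((hwin.dom ?_).dom (hd c (mem_colors.2 (hT q c hq).1)))
  refine Dom.transPStar M (Dom.of_subset ?_) y
  rw [Set.singleton_subset_iff]
  exact ⟨⟨c, hq, le_rfl⟩, rfl⟩

end Codes

end DelayGames

namespace DelayGames

/-! ### Run segments -/

universe u

variable {Q I O : Type*} (M : DPA Q (I × O))

/-- The maximal color of the run of `M` on `x` at the positions `p, …, r`. -/
def maxCol (x : ℕ → I × O) (p r : ℕ) : ℕ := (Finset.Icc p r).sup fun i => M.color (M.run x i)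

variable {M}

theorem le_maxCol {x : ℕ → I × O} {p r i : ℕ} (h1 : p ≤ i) (h2 : i ≤ r) :
    M.color (M.run x i) ≤ maxCol M x p r :=
  Finset.le_sup (f := fun i => M.color (M.run x i)) (Finset.mem_Icc.2 ⟨h1, h2⟩)

theorem exists_eq_maxCol {x : ℕ → I × O} {p r : ℕ} (h : p ≤ r) :
    ∃ i, p ≤ i ∧ i ≤ r ∧ M.color (M.run x i) = maxCol M x p r := by
  obtain ⟨i, hi, he⟩ := Finset.exists_mem_eq_sup (Finset.Icc p r) ⟨p, by simpa using h⟩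
    (fun i => M.color (M.run x i))
  rw [Finset.mem_Icc] at hi
  exact ⟨i, hi.1, hi.2, he.symm⟩

theorem maxCol_le {x : ℕ → I × O} {p r e : ℕ}
    (h : ∀ i, p ≤ i → i ≤ r → M.color (M.run x i) ≤ e) : maxCol M x p r ≤ e :=
  Finset.sup_le fun i hi => h i (Finset.mem_Icc.1 hi).1 (Finset.mem_Icc.1 hi).2

theorem maxCol_split (x : ℕ → I × O) {p m r : ℕ} (h1 : p ≤ m) (h2 : m ≤ r) :
    maxCol M x p r = max (maxCol M x p m) (maxCol M x m r) := by
  apply le_antisymm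
  · refine maxCol_le fun i hi hi' => ?_
    rcases le_total i m with h | h
    · exact le_max_of_le_left (le_maxCol hi h)
    · exact le_max_of_le_right (le_maxCol h hi')
  · refine max_le (maxCol_le fun i hi hi' => le_maxCol hi (by omega))
      (maxCol_le fun i hi hi' => le_maxCol (by omega) hi')

theorem maxCol_congr {x y : ℕ → I × O} {p r : ℕ} (h : ∀ i ≤ r, M.run x i = M.run y i) :
    maxCol M x p r = maxCol M y p r := by
  refine Finset.sup_congr rfl fun i hi => ?_
  rw [h i (Finset.mem_Icc.1 hi).2]

theorem run_congr {x y : ℕ → I × O} {p : ℕ} (h : ∀ i < p, x i = y i) : M.run x p = M.run y p := by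
  induction p with
  | zero => rfl
  | succ p ih =>
    change M.trans _ _ = M.trans _ _
    rw [ih fun i hi => h i (by omega), h p (by omega)]

theorem maxCol_succ (x : ℕ → I × O) {p r : ℕ} (h : p ≤ r) :
    maxCol M x p (r + 1) = max (maxCol M x p r) (M.color (M.run x (r + 1))) := by
  rw [maxCol_split x h (Nat.le_succ r)]
  have : Finset.Icc r (r + 1) = {r, r + 1} := by
    ext i
    simp only [Finset.mem_Icc, Finset.mem_insert, Finset.mem_singleton]
    omega
  have e : maxCol M x r (r + 1) = max (M.color (M.run x r)) (M.color (M.run x (r + 1))) := by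
    simp [maxCol, this]
  rw [e, ← max_assoc, max_eq_left (le_maxCol (x := x) h le_rfl)]

/-- A run segment witnesses membership in the set of reachable pairs. -/
theorem seg_mem_rr (x : ℕ → I × O) (p l : ℕ) :
    (M.run x (p + l), maxCol M x p (p + l)) ∈
      M.rr ((List.range l).map fun j => (x (p + j)).1) (M.run x p) := by
  induction l with
  | zero => simp [DPA.rr, maxCol]
  | succ l ih =>
    rw [List.range_succ, List.map_append, DPA.rr, M.transPStar_append]
    refine M.mem_transP.2 ⟨_, ih, (x (p + l)).2, ?_⟩
    rw [← Nat.add_assoc, maxCol_succ x (Nat.le_add_right p l)]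
    rfl

/-- Conversely, a reachable pair is realized by a word of answers `b` of Player O. -/
theorem exists_answers [Nonempty O] (q : Q) (w : List I) : ∀ t ∈ M.rr w q, ∃ b : ℕ → O,
    ∀ (x : ℕ → I × O) (p : ℕ), M.run x p = q →
      (∀ i < w.length, w[i]? = some (x (p + i)).1 ∧ b i = (x (p + i)).2) →
      M.run x (p + w.length) = t.1 ∧ maxCol M x p (p + w.length) = t.2 := by
  induction w using List.reverseRecOn with
  | nil =>
    intro t ht
    rw [DPA.rr, M.transPStar_nil, Set.mem_singleton_iff] at ht
    subst ht
    obtain ⟨b⟩ := ‹Nonempty O›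
    exact ⟨fun _ => b, fun x p hp _ => by simp [maxCol, hp]⟩
  | append_singleton w a ih =>
    intro t ht
    rw [DPA.rr, M.transPStar_append] at ht
    obtain ⟨s, hs, b0, rfl⟩ := M.mem_transP.1 ht
    obtain ⟨b, hb⟩ := ih s hs
    refine ⟨fun i => if i = w.length then b0 else b i, fun x p hp hx => ?_⟩
    obtain ⟨h1, h2⟩ := hb x p hp fun i hi => by
      have := hx i (by simp; omega)
      rw [List.getElem?_append_left hi] at this
      simpa [hi.ne] using this
    have h3 := hx w.length (by simp)
    simp only [List.getElem?_concat_length, Option.some.injEq, if_true] at h3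
    have h4 : x (p + w.length) = (a, b0) := Prod.ext h3.1.symm h3.2.symm
    have h5 : M.run x (p + w.length + 1) = M.trans s.1 (a, b0) := by
      change M.trans _ _ = _
      rw [h1, h4]
    rw [List.length_append, List.length_singleton, ← Nat.add_assoc,
      maxCol_succ x (Nat.le_add_right _ _), h2, h5]
    exact ⟨rfl, rfl⟩

/-! ### From a winning strategy to the winning family -/

theorem Adv.of_le {B c : ℕ} {θ' θ : ℕ → Ordinal} (h1 : ∀ i, c ≤ i → θ' i ≤ θ i)
    (h2 : ∀ i, B ≤ i → θ' i = θ i) (h3 : ¬ Even c → θ' c < θ c) : Adv B c θ' θ := by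
  classical
  by_cases h : EqAt c θ' θ
  · refine Or.inr ⟨?_, h⟩
    by_contra hc
    exact (h3 hc).ne (h c le_rfl)
  · left
    unfold EqAt at h
    push Not at h
    obtain ⟨i, hi, hne⟩ := h
    -- the largest index at which the measures differ
    let P : ℕ → Prop := fun j => c ≤ j ∧ θ' j ≠ θ j
    have hB : ∀ j, P j → j < B := fun j hj => by
      by_contra hlt
      exact hj.2 (h2 j (by omega))
    have hPi : P i := ⟨hi, hne⟩
    have hspec : P (Nat.findGreatest P B) := Nat.findGreatest_spec (hB i hPi).le hPi
    refine ⟨Nat.findGreatest P B, hspec.1, hB _ hspec, lt_of_le_of_ne (h1 _ hspec.1) hspec.2,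
      fun j hj => ?_⟩
    by_contra hne'
    have hPj : P j := ⟨hspec.1.trans hj.le, hne'⟩
    exact absurd (Nat.le_findGreatest (hB j hPj).le hPj) (by omega)

/-- The outcome of Player I producing `α` and Player O answering according to `σ`. -/
def play (σ : (ℕ → I) → ℕ → O) (α : ℕ → I) : ℕ → I × O := fun n => (α n, σ α n)

/-- The `n`-th answer of `σ` depends only on the first `G (n + 1)` letters of the input. -/
def Causal (G : ℕ → ℕ) (σ : (ℕ → I) → ℕ → O) : Prop :=
  ∀ α α' n, (∀ i < G (n + 1), α i = α' i) → σ α n = σ α' n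

theorem run_play_congr {G : ℕ → ℕ} {σ : (ℕ → I) → ℕ → O} (hG : Monotone G) (hGp : ∀ p, p ≤ G p)
    (hσ : Causal G σ) {α α' : ℕ → I} {p : ℕ} (h : ∀ i < G p, α i = α' i) :
    ∀ j ≤ p, M.run (play σ α) j = M.run (play σ α') j := by
  intro j hj
  refine run_congr fun i hi => ?_
  have hGi : G (i + 1) ≤ G p := hG (by omega)
  have := hGp (i + 1)
  exact Prod.ext (h i (by omega)) (hσ _ _ _ fun k hk => h k (by omega))

/-- The extension of a finite word to an infinite word by the letter `a`. -/
def pad (a : I) (u : List I) : ℕ → I := fun i => u.getD i a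

theorem pad_prefix (a : I) {u u' : List I} (h : u <+: u') {i : ℕ} (hi : i < u.length) :
    pad a u' i = pad a u i := by
  obtain ⟨t, rfl⟩ := h
  simp [pad, List.getD_eq_getElem?_getD, List.getElem?_append_left hi]

/-- In a node `(u, p)` of the game tree, Player I has produced `u`, which determines the
answers of Player O, and hence her run, up to position `p`. -/
def IsNode (G : ℕ → ℕ) (h : List I × ℕ) : Prop := h.2 < h.1.length ∧ G h.2 ≤ h.1.length

variable (M) in
/-- The node `h'` extends `h`, and the largest color of the run between them is `e`. -/
def Below (G : ℕ → ℕ) (σ : (ℕ → I) → ℕ → O) (a : I) (e : ℕ) (h' h : List I × ℕ) : Prop :=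
  IsNode G h' ∧ IsNode G h ∧ h.1 <+: h'.1 ∧ h.2 < h'.2 ∧
    maxCol M (play σ (pad a h'.1)) h.2 h'.2 = e

/-- For odd `e`, an infinite descending chain would yield a play consistent with `σ` whose
largest color seen infinitely often is `e`. -/
theorem wf_below {G : ℕ → ℕ} {σ : (ℕ → I) → ℕ → O} (hG : Monotone G) (hGp : ∀ p, p ≤ G p)
    (hσ : Causal G σ) (hwin : ∀ α, play σ α ∈ M.Lparity) (a : I) {e : ℕ} (he : ¬ Even e) :
    WellFounded (Below M G σ a e) := by
  rw [wellFounded_iff_isEmpty_descending_chain]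
  refine ⟨fun ⟨h, hdesc⟩ => ?_⟩
  have hp : ∀ n, n ≤ (h n).2 := by
    intro n
    induction n with
    | zero => omega
    | succ n ih =>
      have := (hdesc n).2.2.2.1
      omega
  have hpm : ∀ n, (h n).2 ≤ (h (n + 1)).2 := fun n => (hdesc n).2.2.2.1.le
  have hnode : ∀ n, IsNode G (h n) := fun n => (hdesc n).2.1
  have hpre : ∀ m n, m ≤ n → (h m).1 <+: (h n).1 := by
    intro m n hmn
    induction n, hmn using Nat.le_induction with
    | base => exact List.prefix_refl _
    | succ n _ ih => exact ih.trans (hdesc n).2.2.1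
  let α : ℕ → I := fun i => pad a (h i).1 i
  have hα : ∀ n, ∀ i < (h n).1.length, α i = pad a (h n).1 i := by
    intro n i hi
    have h1 : i < (h i).1.length := (hp i).trans_lt (hnode i).1
    rcases le_total i n with hin | hin
    · exact (pad_prefix a (hpre i n hin) h1).symm
    · exact pad_prefix a (hpre n i hin) hi
  have hmax : ∀ n, maxCol M (play σ α) (h n).2 (h (n + 1)).2 = e := by
    intro n
    rw [← (hdesc n).2.2.2.2]
    refine maxCol_congr (run_play_congr hG hGp hσ fun i hi => hα _ i ?_)
    exact hi.trans_le (hnode (n + 1)).2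
  have hle : ∀ n i, (h 0).2 ≤ i → i ≤ (h n).2 → M.color (M.run (play σ α) i) ≤ e := by
    intro n
    induction n with
    | zero =>
      intro i h1 h2
      rw [← hmax 0]
      exact le_maxCol h1 (h2.trans (hpm 0))
    | succ n ih =>
      intro i h1 h2
      rcases le_total i (h n).2 with h3 | h3
      · exact ih i h1 h3
      · rw [← hmax n]
        exact le_maxCol h3 h2
  obtain ⟨k, hk, hinf, hmaxk⟩ := hwin α
  have hek : e ≤ k := by
    apply hmaxk
    refine Set.infinite_of_not_bddAbove fun ⟨b, hb⟩ => ?_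
    obtain ⟨i, h1, h2, h3⟩ := exists_eq_maxCol (M := M) (x := play σ α) (hpm (b + 1))
    have := hb (show i ∈ {n | M.color (M.run (play σ α) n) = e} from h3.trans (hmax _))
    have := hp (b + 1)
    omega
  have hke : k ≤ e := by
    obtain ⟨i, hi, hlt⟩ := hinf.exists_gt (h 0).2
    have hi' : M.color (M.run (play σ α) i) = k := hi
    rw [← hi']
    exact hle i i hlt.le (hp i)
  exact he (le_antisymm hek hke ▸ hk)

theorem rank_mono {α : Type*} {r : α → α → Prop} {x y : α} (hx : Acc r x) (hy : Acc r y)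
    (h : ∀ z, r z x → r z y) : hx.rank ≤ hy.rank := by
  rw [hx.rank_eq]
  refine Ordinal.iSup_le fun z => ?_
  rw [Order.succ_le_iff]
  exact hy.rank_lt_of_rel (h z z.2)

/-- If `σ` wins every play, then the pairs reachable from the initial state are winning. The
measure of a node has as its odd components `e` the ranks with respect to `Below … e`. -/
theorem win_of_causal {I : Type u} [Nonempty I] {M : DPA Q (I × O)} {G : ℕ → ℕ}
    {σ : (ℕ → I) → ℕ → O} (hG : Monotone G) (hGp : ∀ p, p ≤ G p) (hG0 : G 0 = 0)
    (hσ : Causal G σ) (hwin : ∀ α, play σ α ∈ M.Lparity) {B : ℕ} (hB : ∀ q, M.color q < B)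
    (w : List I) (hw : 1 ≤ w.length) : ∃ θ : ℕ → Ordinal.{u}, Win M B (M.rr w M.init) θ := by
  classical
  obtain ⟨a⟩ := ‹Nonempty I›
  have hwf : ∀ e, ¬ Even e → WellFounded (Below M G σ a e) := fun e he =>
    wf_below hG hGp hσ hwin a he
  let θ : List I × ℕ → ℕ → Ordinal.{u} := fun h e =>
    if he : ¬ Even e ∧ e < B then ((hwf e he.1).apply h).rank else 0
  refine ⟨θ (w, 0), fun S ϑ => ∃ h, IsNode G h ∧ ϑ = θ h ∧
    S = M.rr (h.1.drop h.2) (M.run (play σ (pad a h.1)) h.2), ?_, (w, 0), ⟨hw, by simp [hG0]⟩,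
    rfl, rfl⟩
  rintro S ϑ ⟨⟨u, p⟩, hn, rfl, rfl⟩
  refine ⟨G u.length + 1, fun y hy => ?_⟩
  set h' : List I × ℕ := (u ++ y, u.length) with hh'
  have hn' : IsNode G h' := by
    constructor
    · simp only [hh', List.length_append]
      omega
    · simp only [hh', List.length_append]
      omega
  have hp : p < u.length := hn.1
  set x := play σ (pad a (u ++ y)) with hx
  have hstart : M.run (play σ (pad a u)) p = M.run x p :=
    run_play_congr hG hGp hσ (fun i hi =>
      (pad_prefix a (List.prefix_append u y) (hi.trans_le hn.2)).symm) p le_rfl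
  have hword : ((List.range (u.length - p)).map fun j => (x (p + j)).1) = u.drop p := by
    apply List.ext_getElem
    · simp
    · intro i h1 h2
      have : p + i < u.length := by
        simp at h2
        omega
      simp [hx, play, pad, List.getD_eq_getElem?_getD, List.getElem?_append_left this, this]
  refine ⟨M.run x u.length, maxCol M x p u.length, ?_, θ h', ?_, h', hn', rfl, ?_⟩
  · have := seg_mem_rr (M := M) x p (u.length - p)
    rw [hword, show p + (u.length - p) = u.length by omega] at this
    simp only [hstart]
    exact this
  · have hrel : Below M G σ a (maxCol M x p u.length) h' (u, p) :=
      ⟨hn', hn, List.prefix_append u y, hp, rfl⟩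
    refine Adv.of_le (fun e hce => ?_) (fun e he => ?_) (fun hc => ?_)
    · by_cases he : ¬ Even e ∧ e < B
      · simp only [θ, he, not_false_eq_true, and_self, dite_true]
        refine rank_mono _ _ fun z hz => ?_
        obtain ⟨z1, z2, z3, z4, z5⟩ := hz
        refine ⟨z1, hn, (List.prefix_append u y).trans z3, hp.trans z4, ?_⟩
        rw [maxCol_split _ hp.le z4.le, z5]
        refine max_eq_right (le_of_eq_of_le ?_ hce)
        refine maxCol_congr (run_play_congr hG hGp hσ fun i hi => pad_prefix a z3 ?_)
        exact hi.trans_le hn'.2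
      · simp only [θ, he, dite_false, le_refl]
    · have : ¬ (¬ Even e ∧ e < B) := by omega
      simp only [θ, this, dite_false]
    · have hcB : maxCol M x p u.length < B := by
        obtain ⟨i, -, -, h⟩ := exists_eq_maxCol (M := M) (x := x) hp.le
        rw [← h]
        exact hB _
      simp only [θ, hc, hcB, not_false_eq_true, and_self, dite_true]
      exact Acc.rank_lt_of_rel ((hwf _ hc).apply (u, p)) hrel
  · simp [hh', hx]

/-! ### Strategies as causal maps -/

/-- The number of letters Player I has produced before round `p`. -/
def total (f : ℕ → ℕ) (p : ℕ) : ℕ := ∑ i ∈ Finset.range p, f i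

theorem total_succ (f : ℕ → ℕ) (p : ℕ) : total f (p + 1) = total f p + f p :=
  Finset.sum_range_succ f p

theorem pre_length {A : Type*} (x : ℕ → A) (k : ℕ) : (pre x k).length = k := by
  simp [pre]

theorem pre_congr {A : Type*} {x y : ℕ → A} {k : ℕ} (h : ∀ i < k, x i = y i) :
    pre x k = pre y k :=
  List.map_congr_left fun i hi => h i (List.mem_range.1 hi)

/-- Every input word is the concatenation of the blocks prescribed by `f`, so a winning
strategy yields a causal map all of whose plays are winning. -/
theorem exists_causal_of_winsO {f : ℕ → ℕ} {L : Set (ℕ → I × O)} (h : WinsO f L) :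
    ∃ σ : (ℕ → I) → ℕ → O, Causal (total f) σ ∧ ∀ α, play σ α ∈ L := by
  obtain ⟨τ, hτ⟩ := h
  refine ⟨fun α n => τ (pre α (total f (n + 1))), fun α α' n h => ?_, fun α => ?_⟩
  · simp only [pre_congr h]
  · let u : ℕ → List I := fun i => (List.range (f i)).map fun j => α (total f i + j)
    have hflat : ∀ i, ((List.range i).map u).flatten = pre α (total f i) := by
      intro i
      induction i with
      | zero => simp [total, pre]
      | succ i ih =>
        rw [List.range_succ, List.map_append, List.flatten_append, ih, total_succ, pre, pre,
          List.range_add, List.map_append]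
        simp [u]
    refine hτ u _ α (fun i => by simp [u]) (fun i => by rw [hflat]) (fun i => ?_)
    rw [hflat, pre_length, pre]

/-- The constant delay function with initial lookahead `d`. -/
def constDelay (d : ℕ) : ℕ → ℕ := fun i => if i = 0 then d else 1

theorem winsO_of_causal [Nonempty I] {d : ℕ} {L : Set (ℕ → I × O)}
    {σ : (ℕ → I) → ℕ → O} (hσ : ∀ α α' n, (∀ i < d + n, α i = α' i) → σ α n = σ α' n)
    (hwin : ∀ α, play σ α ∈ L) : WinsO (constDelay d) L := by
  obtain ⟨a⟩ := ‹Nonempty I›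
  refine ⟨fun l => σ (pad a l) (l.length - d), fun u v α hu hv hα => ?_⟩
  have hlen : ∀ i, ((List.range (i + 1)).map u).flatten.length = d + i := by
    intro i
    induction i with
    | zero => simp [hu 0, constDelay]
    | succ i ih =>
      rw [List.range_succ, List.map_append, List.flatten_append, List.length_append, ih]
      simp [hu (i + 1), constDelay]
      omega
  have : (fun n => (α n, v n)) = play σ α := by
    funext n
    refine Prod.ext rfl ?_
    change v n = σ α n
    rw [hv n]
    simp only [hlen, Nat.add_sub_cancel_left]
    refine hσ _ _ _ fun i hi => ?_
    rw [hα (n + 1), hlen]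
    simp [pad, List.getD_eq_getElem?_getD, hi]
  rw [this]
  exact hwin α

end DelayGames

namespace DelayGames

/-! ### The strategy with constant delay -/

universe u

variable {Q O : Type*} {I : Type u}

/-- The `j`-th block of length `F` of `α`. -/
def blk (F : ℕ) (α : ℕ → I) (j : ℕ) : List I := (List.range F).map fun i => α (j * F + i)

theorem blk_length (F : ℕ) (α : ℕ → I) (j : ℕ) : (blk F α j).length = F := by simp [blk]

theorem blk_congr {F j : ℕ} {α α' : ℕ → I} (h : ∀ i < (j + 1) * F, α i = α' i) :
    blk F α j = blk F α' j := by
  refine List.map_congr_left fun i hi => h _ ?_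
  rw [List.mem_range] at hi
  rw [Nat.succ_mul]
  omega

/-- Player O's bookkeeping: the state and measure reached at the beginning of each block. -/
def track {Θ : Type*} (F : ℕ) (s₀ : List I → Q × Θ)
    (next : Q × Θ → List I → List I → Q × ℕ × Θ) (α : ℕ → I) : ℕ → Q × Θ
  | 0 => s₀ (blk F α 0)
  | j + 1 =>
    let t := next (track F s₀ next α j) (blk F α j) (blk F α (j + 1))
    (t.1, t.2.2)

theorem track_congr {Θ : Type*} {F : ℕ} {s₀ : List I → Q × Θ}
    {next : Q × Θ → List I → List I → Q × ℕ × Θ} {α α' : ℕ → I} {j : ℕ}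
    (h : ∀ i < (j + 1) * F, α i = α' i) : track F s₀ next α j = track F s₀ next α' j := by
  induction j with
  | zero => simp only [track, blk_congr h]
  | succ j ih =>
    have hj : ∀ i < (j + 1) * F, α i = α' i := fun i hi => h i (by
      rw [Nat.succ_mul]
      omega)
    simp only [track, blk_congr h, blk_congr hj, ih hj]

/-- A sequence of states has a largest color occurring infinitely often, and eventually no larger
color occurs. -/
theorem exists_limsup [Finite Q] (c : Q → ℕ) (ρ : ℕ → Q) : ∃ K, {n | c (ρ n) = K}.Infinite ∧
    ∃ n₀, ∀ n, n₀ ≤ n → c (ρ n) ≤ K := by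
  have hbdd : BddAbove (Set.range c) := Set.Finite.bddAbove (Set.finite_range c)
  obtain ⟨B, hB⟩ := hbdd
  let P : Set ℕ := {k | {n | c (ρ n) = k}.Infinite}
  have hPB : ∀ k ∈ P, k ≤ B := by
    intro k hk
    obtain ⟨n, hn⟩ := Set.Infinite.nonempty hk
    have hn' : c (ρ n) = k := hn
    rw [← hn']
    exact hB ⟨_, rfl⟩
  have hne : P.Nonempty := by
    obtain ⟨q, hq⟩ := Finite.exists_infinite_fiber ρ
    refine ⟨c q, (Set.infinite_coe_iff.1 hq).mono ?_⟩
    intro n hn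
    have hn' : ρ n = q := hn
    change c (ρ n) = c q
    rw [hn']
  have hmem : sSup P ∈ P := Nat.sSup_mem hne ⟨B, hPB⟩
  refine ⟨sSup P, hmem, ?_⟩
  have hfin : {n | sSup P < c (ρ n)}.Finite := by
    refine Set.Finite.subset (Set.Finite.biUnion (Set.finite_Icc (sSup P + 1) B)
      (t := fun k => {n | c (ρ n) = k}) fun k hk => ?_) ?_
    · by_contra hinf
      have := le_csSup (⟨B, hPB⟩ : BddAbove P) (show k ∈ P from hinf)
      have := hk.1
      omega
    · intro n hn
      exact Set.mem_biUnion (show c (ρ n) ∈ Set.Icc (sSup P + 1) B from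
        ⟨hn, hB ⟨_, rfl⟩⟩) rfl
  obtain ⟨b, hb⟩ := hfin.bddAbove
  refine ⟨b + 1, fun n hn => ?_⟩
  by_contra hlt
  have := hb (show n ∈ {n | sSup P < c (ρ n)} from not_le.1 hlt)
  omega

/-- If the run on `x`, cut into blocks of length `F`, admits a progressing sequence of measures,
then `x` is accepted. -/
theorem mem_Lparity_of_adv [Finite Q] {M : DPA Q (I × O)} {B F : ℕ} (hF : 0 < F)
    {x : ℕ → I × O} {θ : ℕ → ℕ → Ordinal.{u}}
    (h : ∀ j, Adv B (maxCol M x (j * F) ((j + 1) * F)) (θ (j + 1)) (θ j)) : x ∈ M.Lparity := by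
  obtain ⟨K, hinf, n₀, hn₀⟩ := exists_limsup M.color (M.run x)
  refine ⟨K, ?_, hinf, fun k' hk' => ?_⟩
  · by_contra hK
    have hle : ∀ j, n₀ ≤ j → maxCol M x (j * F) ((j + 1) * F) ≤ K := fun j hj =>
      maxCol_le fun i hi _ => hn₀ i (hj.trans ((Nat.le_mul_of_pos_right j hF).trans hi))
    refine no_descent h hK ⟨n₀, hle⟩ fun n₁ => ?_
    obtain ⟨i, hi, hlt⟩ := hinf.exists_gt ((max n₀ n₁ + 1) * F)
    have hi' : M.color (M.run x i) = K := hi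
    have hdm : i / F * F + i % F = i := Nat.div_add_mod' i F
    have hm := Nat.mod_lt i hF
    have hj : max n₀ n₁ ≤ i / F := by
      rw [Nat.le_div_iff_mul_le hF]
      rw [Nat.succ_mul] at hlt
      omega
    refine ⟨i / F, (le_max_right _ _).trans hj, le_antisymm (hle _ ((le_max_left _ _).trans hj)) ?_⟩
    rw [← hi']
    refine le_maxCol (by omega) ?_
    rw [Nat.succ_mul]
    omega
  · obtain ⟨i, hi, hlt⟩ := hk'.exists_gt n₀
    have hi' : M.color (M.run x i) = k' := hi
    rw [← hi']
    exact hn₀ i hlt.le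

/-- Player O commits, two blocks of input being known, to the end point of the run on the first
of them; `Win.step_blockLen` keeps the set reachable via the second one winning. -/
theorem winsO_constDelay [Fintype Q] [Nonempty I] [Nonempty O] {M : DPA Q (I × O)} {B : ℕ}
    (h : ∀ w : List I, 1 ≤ w.length → ∃ θ : ℕ → Ordinal.{u}, Win M B (M.rr w M.init) θ) :
    WinsO (constDelay (2 * blockLen M)) M.Lparity := by
  set F := blockLen M with hFdef
  have hF : 0 < F := Nat.add_pos_left (by positivity) _
  have hnext : ∀ (s : Q × (ℕ → Ordinal.{u})) (w w' : List I),
      ∃ t : Q × ℕ × (ℕ → Ordinal.{u}), Win M B (M.rr w s.1) s.2 → w'.length = F →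
        (t.1, t.2.1) ∈ M.rr w s.1 ∧ Adv B t.2.1 t.2.2 s.2 ∧ Win M B (M.rr w' t.1) t.2.2 := by
    intro s w w'
    by_cases hs : Win M B (M.rr w s.1) s.2 ∧ w'.length = F
    · obtain ⟨q, c, h1, θ', h2, h3⟩ := hs.1.step_blockLen (M.valid_rr w s.1) w' hs.2
      exact ⟨(q, c, θ'), fun _ _ => ⟨h1, h2, h3⟩⟩
    · exact ⟨(s.1, 0, s.2), fun h1 h2 => absurd ⟨h1, h2⟩ hs⟩
  choose next hnext using hnext
  have hinit : ∀ w : List I, ∃ θ : ℕ → Ordinal.{u}, 1 ≤ w.length → Win M B (M.rr w M.init) θ := by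
    intro w
    by_cases hw : 1 ≤ w.length
    · obtain ⟨θ, hθ⟩ := h w hw
      exact ⟨θ, fun _ => hθ⟩
    · exact ⟨0, fun h => absurd h hw⟩
  choose θ₀ hθ₀ using hinit
  have hout : ∀ (q : Q) (w : List I) (t : Q × ℕ), ∃ b : ℕ → O, t ∈ M.rr w q →
      ∀ (x : ℕ → I × O) (p : ℕ), M.run x p = q →
        (∀ i < w.length, w[i]? = some (x (p + i)).1 ∧ b i = (x (p + i)).2) →
        M.run x (p + w.length) = t.1 ∧ maxCol M x p (p + w.length) = t.2 := by
    intro q w t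
    by_cases ht : t ∈ M.rr w q
    · obtain ⟨b, hb⟩ := exists_answers q w t ht
      exact ⟨b, fun _ => hb⟩
    · obtain ⟨b⟩ := ‹Nonempty O›
      exact ⟨fun _ => b, fun h => absurd h ht⟩
  choose out hout using hout
  let st : (ℕ → I) → ℕ → Q × (ℕ → Ordinal.{u}) := track F (fun w => (M.init, θ₀ w)) next
  let tr : (ℕ → I) → ℕ → Q × ℕ × (ℕ → Ordinal.{u}) := fun α j =>
    next (st α j) (blk F α j) (blk F α (j + 1))
  let σ : (ℕ → I) → ℕ → O := fun α i =>
    out (st α (i / F)).1 (blk F α (i / F)) ((tr α (i / F)).1, (tr α (i / F)).2.1) (i % F)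
  refine winsO_of_causal (σ := σ) (fun α α' n hαα' => ?_) (fun α => ?_)
  · have hdm : n / F * F + n % F = n := Nat.div_add_mod' n F
    have h2 : ∀ i < (n / F + 1 + 1) * F, α i = α' i := fun i hi => hαα' i (by
      rw [Nat.succ_mul, Nat.succ_mul] at hi
      omega)
    have h1 : ∀ i < (n / F + 1) * F, α i = α' i := fun i hi => h2 i (by
      rw [Nat.succ_mul]
      omega)
    simp only [σ, tr, st, track_congr h1, blk_congr h1, blk_congr h2]
  · have hwin : ∀ j, Win M B (M.rr (blk F α j) (st α j).1) (st α j).2 := by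
      intro j
      induction j with
      | zero => exact hθ₀ _ (by rw [blk_length]; exact hF)
      | succ j ih => exact (hnext _ _ _ ih (blk_length F α (j + 1))).2.2
    have htr := fun j => hnext _ _ _ (hwin j) (blk_length F α (j + 1))
    have hseg : ∀ j, M.run (play σ α) (j * F) = (st α j).1 →
        M.run (play σ α) (j * F + F) = (tr α j).1 ∧
          maxCol M (play σ α) (j * F) (j * F + F) = (tr α j).2.1 := by
      intro j hj
      have := hout _ _ _ (htr j).1 (play σ α) (j * F) hj fun i hi => by
        rw [blk_length] at hi
        have hdiv : (j * F + i) / F = j := by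
          rw [Nat.mul_comm, Nat.mul_add_div hF, Nat.div_eq_of_lt hi, Nat.add_zero]
        have hmod : (j * F + i) % F = i := by
          rw [Nat.mul_comm, Nat.mul_add_mod, Nat.mod_eq_of_lt hi]
        constructor
        · simp [blk, hi, play]
        · simp only [play, σ, hdiv, hmod]
          rfl
      rwa [blk_length] at this
    have hrun : ∀ j, M.run (play σ α) (j * F) = (st α j).1 := by
      intro j
      induction j with
      | zero => simp [DPA.run, st, track]
      | succ j ih =>
        rw [Nat.succ_mul]
        exact (hseg j ih).1
    refine mem_Lparity_of_adv (B := B) hF (θ := fun j => (st α j).2) fun j => ?_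
    rw [Nat.succ_mul, (hseg j (hrun j)).2]
    exact (htr j).2.1

/-! ### The bound -/

theorem mul_nine_pow_le (n : ℕ) : n * 9 ^ n ≤ 16 ^ n := by
  rcases Nat.lt_or_ge n 2 with hn | hn
  · interval_cases n <;> norm_num
  · induction n, hn using Nat.le_induction with
    | base => norm_num
    | succ n hn ih =>
      calc (n + 1) * 9 ^ (n + 1) = (9 * (n + 1)) * 9 ^ n := by ring
        _ ≤ (16 * n) * 9 ^ n := Nat.mul_le_mul_right _ (by omega)
        _ = 16 * (n * 9 ^ n) := by ring
        _ ≤ 16 * 16 ^ n := Nat.mul_le_mul_left _ ih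
        _ = 16 ^ (n + 1) := by ring

theorem two_mul_sq_le {k : ℕ} (hk : 3 ≤ k) : 2 * ((k + 1) * (k + 1)) ≤ 4 ^ k := by
  induction k, hk using Nat.le_induction with
  | base => norm_num
  | succ k hk ih =>
    rw [pow_succ]
    nlinarith

theorem mul_beta_le (n k : ℕ) (hk : 2 ≤ k) :
    n * ((k + 1) ^ n * (k + 1) ^ n) ≤ 2 ^ (2 * n * k) := by
  have e1 : (k + 1) ^ n * (k + 1) ^ n = ((k + 1) * (k + 1)) ^ n := (mul_pow _ _ n).symm
  have e2 : 2 ^ (2 * n * k) = (4 ^ k) ^ n := by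
    rw [show (4 : ℕ) = 2 ^ 2 by norm_num, ← pow_mul, ← pow_mul]
    congr 1
    ring
  rw [e1, e2]
  rcases eq_or_lt_of_le hk with rfl | hk3
  · exact mul_nine_pow_le n
  · calc n * ((k + 1) * (k + 1)) ^ n ≤ 2 ^ n * ((k + 1) * (k + 1)) ^ n :=
          Nat.mul_le_mul_right _ Nat.lt_two_pow_self.le
      _ = (2 * ((k + 1) * (k + 1))) ^ n := (mul_pow _ _ n).symm
      _ ≤ (4 ^ k) ^ n := Nat.pow_le_pow_left (two_mul_sq_le hk3) n

theorem two_mul_blockLen_le [Fintype Q] {M : DPA Q (I × O)} (hk : 2 ≤ M.numColors) :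
    2 * blockLen M ≤ 2 ^ (2 * Fintype.card Q * M.numColors + 2) := by
  have := mul_beta_le (Fintype.card Q) M.numColors hk
  rw [blockLen, beta, pow_add]
  omega

theorem isDelay_constDelay {d : ℕ} (hd : 1 ≤ d) : IsDelay (constDelay d) := by
  intro i
  unfold constDelay
  split_ifs <;> omega

theorem isConstant_constDelay (d : ℕ) : IsConstant (constDelay d) := by
  intro i hi
  simp [constDelay, hi.ne']

end DelayGames

namespace DelayGames

/-- for `L = L_p(A)` with `A` a deterministic parity automaton
using `k` colors, Player O wins `Γ_f(L)` for some delay function `f` iff she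
wins `Γ_f(L)` for some constant delay function `f` with
`f(0) ≤ 2^{2|A|k + 2} + 2`. -/
theorem stmt13 {Q I O : Type*} [Fintype Q] [Fintype I] [Fintype O]
    [Nonempty I] [Nonempty O] (M : DPA Q (I × O)) (k : ℕ)
    (hk : k = M.numColors) :
    (∃ f, IsDelay f ∧ WinsO f M.Lparity) ↔
      (∃ f, IsDelay f ∧ IsConstant f ∧
        f 0 ≤ 2 ^ (2 * Fintype.card Q * k + 2) + 2 ∧ WinsO f M.Lparity) := by
  constructor
  · rintro ⟨f, hf, hwins⟩
    obtain ⟨σ, hσ, hwin⟩ := exists_causal_of_winsO hwins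
    rcases Nat.lt_or_ge k 2 with hk2 | hk2
    · -- with a single color, a single accepted word shows that all words are accepted
      have hconst : ∀ q, M.color q = M.color M.init := by
        intro q
        have h1 : (Finset.image M.color Finset.univ).card ≤ 1 := by
          change M.numColors ≤ 1
          omega
        exact Finset.card_le_one.1 h1 _ (Finset.mem_image_of_mem _ (Finset.mem_univ q)) _
          (Finset.mem_image_of_mem _ (Finset.mem_univ _))
      have hall : ∀ x, x ∈ M.Lparity := by
        intro x
        obtain ⟨a⟩ := ‹Nonempty I›
        obtain ⟨e, he⟩ := hwin fun _ => a
        simp only [hconst] at he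
        change MaxEvenInf _
        simp only [hconst]
        exact ⟨e, he⟩
      obtain ⟨b⟩ := ‹Nonempty O›
      exact ⟨constDelay 1, isDelay_constDelay le_rfl, isConstant_constDelay 1,
        by simp [constDelay], fun _ => b, fun _ _ _ _ _ _ => hall _⟩
    · subst hk
      have hmono : Monotone (total f) := monotone_nat_of_le_succ fun n => by
        rw [total_succ]
        omega
      have hge : ∀ p, p ≤ total f p := by
        intro p
        induction p with
        | zero => omega
        | succ p ih =>
          have := hf p
          rw [total_succ]
          omega
      obtain ⟨B, hB⟩ := (Set.finite_range M.color).bddAbove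
      have hB' : ∀ q, M.color q < B + 1 := fun q => Nat.lt_succ_of_le (hB ⟨q, rfl⟩)
      refine ⟨constDelay (2 * blockLen M), isDelay_constDelay ?_, isConstant_constDelay _, ?_,
        winsO_constDelay fun w hw => win_of_causal hmono hge rfl hσ hwin hB' w hw⟩
      · have : 0 < blockLen M := Nat.add_pos_left (by positivity) _
        omega
      · have := two_mul_blockLen_le hk2
        simp only [constDelay, if_true]
        omega
  · rintro ⟨f, hf, -, -, hwins⟩
    exact ⟨f, hf, hwins⟩

end DelayGames
end

section
/- Let A be an acyclic nondeterministic finite automaton over Σ_I × Σ_O of depth k, and let L = L_*(A)·(Σ_I × Σ_O)^ω. Then the projection pr_I(L) to the first components is universal (equals Σ_I^ω) if and only if every word w ∈ Σ_I^k has a prefix in L_*(pr_I(A)), where pr_I(A) is the automaton obtained from A by projecting each transition label to its first component. -/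
namespace DelayGames

/-- The projected automaton reaches `q` on `w` exactly when the original automaton reaches `q` on
some word whose first components spell `w`. -/
theorem mem_reach_projI {Q I O : Type*} [Nonempty O] (M : NA Q (I × O)) (S : Set Q)
    (w : List I) (q : Q) :
    q ∈ M.projI.reach S w ↔ ∃ v : List (I × O), v.map Prod.fst = w ∧ q ∈ M.reach S v := by
  induction w using List.reverseRecOn generalizing q with
  | nil => simp [NA.reach]
  | append_singleton w a ih =>
    have hP : q ∈ M.projI.reach S (w ++ [a]) ↔
        ∃ p ∈ M.projI.reach S w, ∃ b, q ∈ M.trans p (a, b) := by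
      simp [NA.reach, NA.projI]
    rw [hP]
    constructor
    · rintro ⟨p, hp, b, hb⟩
      obtain ⟨v, rfl, hv⟩ := (ih p).1 hp
      refine ⟨v ++ [(a, b)], by simp, ?_⟩
      simp only [NA.reach, List.foldl_append, List.foldl_cons, List.foldl_nil, Set.mem_iUnion]
      exact ⟨p, hv, hb⟩
    · rintro ⟨v, hv, hq⟩
      obtain ⟨v, l, rfl, hv1, hl⟩ := List.map_eq_append_iff.1 hv
      obtain ⟨⟨a', b⟩, rfl, rfl⟩ := List.map_eq_singleton_iff.1 hl
      simp only [NA.reach, List.foldl_append, List.foldl_cons, List.foldl_nil,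
        Set.mem_iUnion] at hq
      obtain ⟨p, hp, hb⟩ := hq
      exact ⟨p, (ih p).2 ⟨v, hv1, hp⟩, b, hb⟩

theorem mem_Lstar_projI {Q I O : Type*} [Nonempty O] (M : NA Q (I × O)) (w : List I) :
    w ∈ M.projI.Lstar ↔ ∃ v ∈ M.Lstar, v.map Prod.fst = w := by
  constructor
  · rintro ⟨q, hq, ha⟩
    obtain ⟨v, hv, hr⟩ := (mem_reach_projI M _ w q).1 hq
    exact ⟨v, ⟨q, hr, ha⟩, hv⟩
  · rintro ⟨v, ⟨q, hr, ha⟩, hv⟩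
    exact ⟨q, (mem_reach_projI M _ w q).2 ⟨v, hv, hr⟩, ha⟩

/-- for an acyclic NFA `A` over `Σ_I × Σ_O` of depth `k` and
`L = L_*(A)·(Σ_I × Σ_O)^ω`, the projection `pr_I(L)` is universal iff every
word `w ∈ Σ_I^k` has a prefix in `L_*(pr_I(A))`. -/
theorem stmt16 {Q I O : Type*} [Fintype Q] [Fintype I] [Fintype O]
    [Nonempty I] [Nonempty O] (M : NA Q (I × O)) (hacyc : M.Acyclic)
    (k : ℕ) (hdepth : M.HasDepth k) :
    projL (extOmega M.Lstar) = Set.univ ↔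
      ∀ w : List I, w.length = k → ∃ p, p <+: w ∧ p ∈ (M.projI).Lstar := by
  constructor
  · intro h w hw
    obtain ⟨a⟩ := ‹Nonempty I›
    -- extend `w` to an ω-word; the depth bound puts its accepted prefix inside `w`
    have hmem : (fun n => w.getD n a) ∈ projL (extOmega M.Lstar) := h ▸ Set.mem_univ _
    obtain ⟨β, j, hj⟩ := hmem
    have hjk : j ≤ k := by simpa [pre] using hdepth.1 _ hj
    refine ⟨w.take j, List.take_prefix j w, (mem_Lstar_projI M _).2 ⟨_, hj, ?_⟩⟩
    apply List.ext_getElem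
    · simp [pre]; omega
    · intro n h1 h2
      have hn : n < w.length := by simp at h2; omega
      simp [pre, hn]
  · intro h
    refine Set.eq_univ_of_forall fun α => ?_
    obtain ⟨p, hp, hpL⟩ := h (pre α k) (by simp [pre])
    obtain ⟨v, hv, rfl⟩ := (mem_Lstar_projI M p).1 hpL
    obtain ⟨b⟩ := ‹Nonempty O›
    -- the outputs beyond the accepted word `v` are irrelevant
    refine ⟨fun n => (v.map Prod.snd).getD n b, v.length, ?_⟩
    convert hv using 1
    apply List.ext_getElem
    · simp [pre]
    · intro n h1 h2
      have hα := hp.getElem (i := n) (by simpa using h2)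
      simp only [pre, List.getElem_map, List.getElem_range] at hα
      simp [pre, h2, ← hα]

end DelayGames
end

section
/- For every n ≥ 0 let Σ_I = Σ_O = {a,b} and L_n = { (α(0),β(0))⋯(α(n),β(n)) ∈ (Σ_I × Σ_O)^{n+1} : β(0) = α(n) }. Then (i) there is a constant c such that for every n, L_n = L_*(A_n) for a deterministic acyclic finite automaton A_n with at most c·n states and depth n+1; (ii) Player O wins Γ_f(L_n·(Σ_I × Σ_O)^ω) for some constant delay function f; and (iii) Player I wins Γ_f(L_n·(Σ_I × Σ_O)^ω) for every delay function f with f(0) ≤ n. -/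
namespace DelayGames

/-- The clopen winning condition `L_n` over `Σ_I = Σ_O = {a, b}` (represented
by `Fin 2`): words `(α(0),β(0))⋯(α(n),β(n))` of length `n + 1` with
`β(0) = α(n)`. -/
def Lclop (n : ℕ) : Set (List (Fin 2 × Fin 2)) :=
  {w | w.length = n + 1 ∧ (w.getD 0 default).2 = (w.getD n default).1}

/-! ### The automaton -/

/-- One step of the automaton for `Lclop n`. In a state `(k, b)` the counter `k` is the number of
letters read, capped at `n + 2`. The bit `b` is `β(0)` for `1 ≤ k ≤ n`, and for `k = n + 1` it
records (as `1`) whether `β(0) = α(n)`; for other `k` it has no meaning. -/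
def clopStep (n : ℕ) (q : Fin (n + 3) × Fin 2) (x : Fin 2 × Fin 2) : Fin (n + 3) × Fin 2 :=
  (⟨min (q.1.val + 1) (n + 2), by omega⟩,
    if q.1.val = n then (if (if q.1.val = 0 then x.2 else q.2) = x.1 then 1 else 0)
    else (if q.1.val = 0 then x.2 else q.2))

/-- The deterministic automaton with transition function `clopStep n`, as an `NA`. -/
def clopNA (n : ℕ) : NA (Fin (n + 3) × Fin 2) (Fin 2 × Fin 2) where
  init := (0, 0)
  trans q x := {clopStep n q x}
  accept := {q | q.1.val = n + 1 ∧ q.2 = 1}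
  complete _ _ := ⟨_, rfl⟩

lemma clopNA_reach (n : ℕ) (q : Fin (n + 3) × Fin 2) (w : List (Fin 2 × Fin 2)) :
    (clopNA n).reach {q} w = {w.foldl (clopStep n) q} := by
  induction w generalizing q with
  | nil => rfl
  | cons a w ih =>
    have h := ih (clopStep n q a)
    simpa [NA.reach, clopNA] using h

lemma clop_foldl_fst (n : ℕ) (w : List (Fin 2 × Fin 2)) (q : Fin (n + 3) × Fin 2) :
    (w.foldl (clopStep n) q).1.val = min (q.1.val + w.length) (n + 2) := by
  induction w generalizing q with
  | nil => have := q.1.isLt; simp; omega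
  | cons a w ih =>
    rw [List.foldl_cons, ih]
    simp only [clopStep, List.length_cons]
    omega

/-- As long as at most `n` letters are read, the bit is the second component of the first letter. -/
lemma clop_foldl_snd (n : ℕ) (w : List (Fin 2 × Fin 2)) (hw : w ≠ []) (hl : w.length ≤ n) :
    (w.foldl (clopStep n) (0, 0)).2 = (w.getD 0 default).2 := by
  induction w using List.reverseRecOn with
  | nil => exact absurd rfl hw
  | append_singleton w a ih =>
    have h1 := clop_foldl_fst n w (0, 0)
    rw [List.length_append, List.length_singleton] at hl
    have h1' : (w.foldl (clopStep n) (0, 0)).1.val = w.length := by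
      rw [h1]; simp; omega
    rw [List.foldl_append, List.foldl_cons, List.foldl_nil]
    simp only [clopStep, h1']
    rw [if_neg (by omega)]
    cases w with
    | nil => simp
    | cons b w =>
      have := ih (by simp) (by omega)
      simpa using this

lemma clopNA_Lstar (n : ℕ) : (clopNA n).Lstar = Lclop n := by
  ext w
  have key : w ∈ (clopNA n).Lstar ↔ (w.foldl (clopStep n) (0, 0)).1.val = n + 1 ∧
      (w.foldl (clopStep n) (0, 0)).2 = 1 := by
    change ((clopNA n).reach {(0, 0)} w ∩ _).Nonempty ↔ _
    rw [clopNA_reach, Set.singleton_inter_nonempty]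
    rfl
  have hfst := clop_foldl_fst n w (0, 0)
  have hlen : (w.foldl (clopStep n) (0, 0)).1.val = n + 1 ↔ w.length = n + 1 := by
    rw [hfst]; simp; omega
  rw [key, hlen]
  refine and_congr_right fun hl => ?_
  -- Split off the letter at position `n`, where the comparison takes place.
  induction w using List.reverseRecOn with
  | nil => simp at hl
  | append_singleton w a _ =>
    rw [List.length_append, List.length_singleton] at hl
    have hl' : w.length = n := by omega
    have h1' : (w.foldl (clopStep n) (0, 0)).1.val = n := by
      rw [clop_foldl_fst]; simp; omega
    have hlast : (w ++ [a]).getD n default = a := by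
      simp [List.getD_eq_getElem?_getD, ← hl']
    rw [List.foldl_append, List.foldl_cons, List.foldl_nil, hlast]
    simp only [clopStep, h1', if_true]
    cases w with
    | nil =>
      have : n = 0 := by simpa using hl'.symm
      subst this
      simp
    | cons b w =>
      have := clop_foldl_snd n (b :: w) (by simp) hl'.le
      have hn0 : n ≠ 0 := by
        rw [← hl']
        simp
      rw [if_neg hn0, this]
      simp

lemma clopNA_acyclic (n : ℕ) : (clopNA n).Acyclic := by
  rintro q ⟨w, hw, hq⟩ ⟨w', hp⟩
  rw [clopNA_reach, Set.mem_singleton_iff] at hq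
  rw [clopNA_reach, Set.singleton_inter_nonempty] at hp
  have h1 := clop_foldl_fst n w q
  have h2 := clop_foldl_fst n w' q
  rw [← hq] at h1
  have h3 := List.length_pos_iff.2 hw
  have h4 := hp.1
  have := q.1.isLt
  omega

lemma clopNA_hasDepth (n : ℕ) : (clopNA n).HasDepth (n + 1) := by
  rw [NA.HasDepth, clopNA_Lstar]
  refine ⟨fun w hw => hw.1.le, List.replicate (n + 1) (0, 0), ⟨by simp, ?_⟩, by simp⟩
  simp [List.getD_eq_getElem?_getD]

/-! ### The delay games -/

lemma mem_extOmega_Lclop (n : ℕ) (α v : ℕ → Fin 2) :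
    (fun i => (α i, v i)) ∈ extOmega (Lclop n) ↔ v 0 = α n := by
  have hpre : ∀ k, (pre (fun i => (α i, v i)) k).length = k := by simp [pre]
  have hget : ∀ i, i ≤ n →
      (pre (fun i => (α i, v i)) (n + 1)).getD i default = (α i, v i) := by
    intro i hi
    simp [pre, List.getD_eq_getElem?_getD, List.getElem?_range (Nat.lt_succ_of_le hi)]
  constructor
  · rintro ⟨k, hk, h⟩
    rw [hpre] at hk
    subst hk
    rwa [hget 0 (Nat.zero_le n), hget n le_rfl] at h
  · intro h
    refine ⟨n + 1, hpre _, ?_⟩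
    rwa [hget 0 (Nat.zero_le n), hget n le_rfl]

lemma IsCat.getElem {I : Type*} {u : ℕ → List I} {α : ℕ → I} (h : IsCat u α) (i n : ℕ)
    (hn : n < ((List.range i).map u).flatten.length) :
    ((List.range i).map u).flatten[n] = α n := by
  have h' := congrArg (fun l => l[n]?) (h i)
  simpa only [List.getElem?_eq_getElem hn, List.getElem?_map, List.getElem?_range hn,
    Option.map_some, Option.some.injEq] using h'

lemma winsO_clop (n : ℕ) :
    WinsO (fun i => if i = 0 then n + 1 else 1) (extOmega (Lclop n)) := by
  refine ⟨fun w => w.getD n 0, fun u v α hu hv hα => ?_⟩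
  rw [mem_extOmega_Lclop, hv 0]
  have hlen : n < ((List.range (0 + 1)).map u).flatten.length := by
    have := hu 0
    simp at this
    simp [this]
  beta_reduce
  rw [List.getD_eq_getElem _ _ hlen]
  exact hα.getElem _ _ hlen

lemma winsI_clop (n : ℕ) (f : ℕ → ℕ) (hf : IsDelay f) (hn : f 0 ≤ n) :
    WinsI f (extOmega (Lclop n)) := by
  refine ⟨fun w => List.replicate (f w.length) (w.getD 0 0 + 1), by simp,
    fun u v α hu hα => ?_⟩
  rw [mem_extOmega_Lclop]
  have hlen : ∀ i, (u i).length = f i := fun i => by rw [hu i]; simp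
  -- After the first block, Player I plays only the letter different from `v 0`.
  have hsplit : ((List.range (n + 2)).map u).flatten =
      u 0 ++ ((List.range (n + 1)).map fun i => u (i + 1)).flatten := by
    rw [List.range_succ_eq_map]
    simp [Function.comp_def]
  have hmem : ∀ x ∈ ((List.range (n + 1)).map fun i => u (i + 1)).flatten, x = v 0 + 1 := by
    intro x hx
    obtain ⟨l, hl, hxl⟩ := List.mem_flatten.1 hx
    obtain ⟨i, -, rfl⟩ := List.mem_map.1 hl
    rw [hu (i + 1)] at hxl
    have := List.eq_of_mem_replicate hxl
    simpa [List.getD_eq_getElem?_getD] using this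
  have hlong : ∀ i, i ≤ ((List.range i).map u).flatten.length := by
    intro i
    induction i with
    | zero => simp
    | succ i ih =>
      have := hf i
      rw [List.range_succ, List.map_append, List.flatten_append, List.length_append]
      simp only [List.map_cons, List.map_nil, List.flatten_cons, List.flatten_nil,
        List.append_nil, hlen]
      omega
  have hlt : n < ((List.range (n + 2)).map u).flatten.length := by
    have := hlong (n + 2)
    omega
  have hαn : α n = v 0 + 1 := by
    rw [← hα.getElem (n + 2) n hlt]
    apply hmem
    simp only [hsplit]
    rw [List.getElem_append_right (by rw [hlen]; exact hn)]
    exact List.getElem_mem _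
  rw [hαn]
  generalize v 0 = b
  revert b
  decide

/-- the languages `L_n` are recognized by deterministic acyclic
finite automata of size `O(n)` and depth `n + 1`; Player O wins
`Γ_f(L_n·(Σ_I × Σ_O)^ω)` for some constant delay function, but Player I wins
`Γ_f(L_n·(Σ_I × Σ_O)^ω)` for every delay function `f` with `f(0) ≤ n`. -/
theorem stmt17 :
    ∃ c : ℕ, ∀ n : ℕ,
      (∃ (Q : Type) (_ : Fintype Q) (M : NA Q (Fin 2 × Fin 2)),
          M.Deterministic ∧ M.Acyclic ∧ Fintype.card Q ≤ c * n + c ∧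
          M.HasDepth (n + 1) ∧ M.Lstar = Lclop n) ∧
      (∃ f, IsDelay f ∧ IsConstant f ∧ WinsO f (extOmega (Lclop n))) ∧
      (∀ f, IsDelay f → f 0 ≤ n → WinsI f (extOmega (Lclop n))) := by
  refine ⟨6, fun n => ⟨⟨_, inferInstance, clopNA n, fun q x => ⟨clopStep n q x, rfl⟩,
    clopNA_acyclic n, ?_, clopNA_hasDepth n, clopNA_Lstar n⟩,
    ⟨fun i => if i = 0 then n + 1 else 1, fun i => ?_, fun i hi => ?_, winsO_clop n⟩,
    fun f hf hn => winsI_clop n f hf hn⟩⟩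
  · simp
    omega
  · dsimp only
    split_ifs <;> omega
  · simp [hi.ne']

end DelayGames
end
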